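/- Let Ω ⊂ ℝ^d be open, bounded, and convex with smooth boundary. Let L u = −∇·(ε∇u) + κ² u where ε^{ij}(x) = ε(x)δ_{ij} is scalar with ε ∈ W^{1,∞}(Ω), Re ε(x) ≥ θ > 0 for all x ∈ Ω, and κ² ∈ L^∞(Ω; ℂ) with Re κ²(x) ≥ −μ, μ/θ < λ₁. Then the elliptic regularity constant C_H satisfies C_H ≤ (λ₁^{−1} ⟨λ₁^{1/3}⟩³ / θ) · (1 + (‖κ²‖_{L^∞} + d^{1/2} max_{1≤i≤d} ‖∂_i ε‖_{L^∞} λ₁^{1/2}) / (θλ₁ − μ)). -/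

import Mathlib

open MeasureTheory Set Filter
open scoped ENNReal NNReal Topology BigOperators

noncomputable section

/-- Euclidean space ℝ^d. -/
abbrev Euc (d : ℕ) := EuclideanSpace ℝ (Fin d)

/-- Smooth compactly supported test functions supported inside Ω. -/
def IsTestFun {d : ℕ} (Ω : Set (Euc d)) (φ : Euc d → ℂ) : Prop :=
  ContDiff ℝ (⊤ : ℕ∞) φ ∧ HasCompactSupport φ ∧ tsupport φ ⊆ Ω

/-- The i-th partial derivative of a (differentiable) function. -/
def pd {d : ℕ} (i : Fin d) (φ : Euc d → ℂ) (x : Euc d) : ℂ :=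
  fderiv ℝ φ x (EuclideanSpace.single i (1 : ℝ))

/-- `v` is the i-th weak partial derivative of `u` on Ω. -/
def IsWeakDeriv {d : ℕ} (Ω : Set (Euc d)) (i : Fin d) (u v : Euc d → ℂ) : Prop :=
  ∀ φ : Euc d → ℂ, IsTestFun Ω φ →
    ∫ x in Ω, u x * pd i φ x = - ∫ x in Ω, v x * φ x

/-- Membership in L²(Ω). -/
def MemL2 {d : ℕ} (Ω : Set (Euc d)) (u : Euc d → ℂ) : Prop :=
  MemLp u 2 (volume.restrict Ω)

/-- The L²(Ω) norm. -/
def L2N {d : ℕ} (Ω : Set (Euc d)) (u : Euc d → ℂ) : ℝ :=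
  (eLpNorm u 2 (volume.restrict Ω)).toReal

/-- The L^∞(Ω) norm. -/
def LinfN {d : ℕ} (Ω : Set (Euc d)) (u : Euc d → ℂ) : ℝ :=
  (eLpNorm u ⊤ (volume.restrict Ω)).toReal

/-- A bundled Sobolev function of integer order k on Ω : the function together with
all of its iterated weak partial derivatives up to order k, all belonging to L²(Ω).
`D j v` is the iterated weak derivative ∂_{v 0} ∂_{v 1} ⋯ ∂_{v (j-1)} u. -/
structure SobFun (d : ℕ) (Ω : Set (Euc d)) (k : ℕ) where
  D : (j : ℕ) → (Fin j → Fin d) → Euc d → ℂ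
  mem : ∀ j, j ≤ k → ∀ v : Fin j → Fin d, MemL2 Ω (D j v)
  weak : ∀ j, j < k → ∀ v : Fin j → Fin d, ∀ i : Fin d,
    IsWeakDeriv Ω i (D j v) (D (j+1) (Fin.cons i v))

/-- The underlying function of a bundled Sobolev function. -/
def SobFun.u {d : ℕ} {Ω : Set (Euc d)} {k : ℕ} (U : SobFun d Ω k) : Euc d → ℂ :=
  U.D 0 (fun i => i.elim0)

/-- First-order weak partial derivatives of a bundled Sobolev function. -/
def SobFun.d1 {d : ℕ} {Ω : Set (Euc d)} {k : ℕ} (U : SobFun d Ω k) (i : Fin d) :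
    Euc d → ℂ :=
  U.D 1 (fun _ => i)

/-- Forgetting the top-order derivatives of a bundled Sobolev function. -/
def SobFun.lower {d : ℕ} {Ω : Set (Euc d)} {k : ℕ} (U : SobFun d Ω (k+1)) :
    SobFun d Ω k :=
  ⟨U.D, fun j hj v => U.mem j (Nat.le_succ_of_le hj) v,
    fun j hj v i => U.weak j (Nat.lt_succ_of_lt hj) v i⟩

/-- Squared Gagliardo seminorm, as an extended nonnegative real. -/
def gagliardoE {d : ℕ} (Ω : Set (Euc d)) (s' : ℝ) (v : Euc d → ℂ) : ℝ≥0∞ :=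
  ∫⁻ x in Ω, ∫⁻ y in Ω,
    ((‖v x - v y‖₊ : ℝ≥0∞) ^ (2 : ℕ)) / ((‖x - y‖₊ : ℝ≥0∞) ^ ((d : ℝ) + 2 * s'))

/-- Gagliardo seminorm with differentiability parameter s' ∈ (0,1). -/
def gagliardo {d : ℕ} (Ω : Set (Euc d)) (s' : ℝ) (v : Euc d → ℂ) : ℝ :=
  ((gagliardoE Ω s' v) ^ ((1 : ℝ)/2)).toReal

/-- Integer-order Sobolev norm ‖·‖_{H^k(Ω)}. -/
def SobNormInt {d : ℕ} {Ω : Set (Euc d)} {k : ℕ} (U : SobFun d Ω k) : ℝ :=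
  Real.sqrt (∑ j ∈ Finset.range (k+1), ∑ v : Fin j → Fin d, (L2N Ω (U.D j v))^2)

/-- Sobolev norm ‖·‖_{H^s(Ω)} for k ≤ s < k+1 : the integer part plus, when s > k,
the Gagliardo seminorms of the top-order derivatives. -/
def SobNormS {d : ℕ} {Ω : Set (Euc d)} {k : ℕ} (s : ℝ) (U : SobFun d Ω k) : ℝ :=
  Real.sqrt ((∑ j ∈ Finset.range (k+1), ∑ v : Fin j → Fin d, (L2N Ω (U.D j v))^2)
    + if (k : ℝ) < s then
        ∑ v : Fin k → Fin d, (gagliardo Ω (s - k) (U.D k v))^2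
      else 0)

/-- Finiteness of the fractional part of the H^s norm (membership in H^s). -/
def SobFinS {d : ℕ} {Ω : Set (Euc d)} {k : ℕ} (s : ℝ) (U : SobFun d Ω k) : Prop :=
  (k : ℝ) < s → ∀ v : Fin k → Fin d, gagliardoE Ω (s - k) (U.D k v) < ⊤

/-- H^s distance between two bundled Sobolev functions, k ≤ s < k+1. -/
def SobDistS {d : ℕ} {Ω : Set (Euc d)} {k : ℕ} (s : ℝ) (U V : SobFun d Ω k) : ℝ :=
  Real.sqrt ((∑ j ∈ Finset.range (k+1), ∑ v : Fin j → Fin d,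
      (L2N Ω (fun x => U.D j v x - V.D j v x))^2)
    + if (k : ℝ) < s then
        ∑ v : Fin k → Fin d, (gagliardo Ω (s - k) (fun x => U.D k v x - V.D k v x))^2
      else 0)

/-- Membership in H¹₀(Ω) : the extension by zero belongs to H¹(ℝ^d). -/
def MemH10 {d : ℕ} (Ω : Set (Euc d)) (u : Euc d → ℂ) : Prop :=
  MemL2 univ (Ω.indicator u) ∧
  ∀ i : Fin d, ∃ v : Euc d → ℂ, MemL2 univ v ∧ IsWeakDeriv univ i (Ω.indicator u) v

/-- The principal Dirichlet eigenvalue of -Δ on Ω, via the Rayleigh variational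
characterization (infimum over smooth compactly supported test functions). -/
def lambda1 {d : ℕ} (Ω : Set (Euc d)) : ℝ :=
  sInf { r : ℝ | ∃ φ : Euc d → ℂ, IsTestFun Ω φ ∧ φ ≠ 0 ∧
    r = (∫ x, ‖fderiv ℝ φ x‖^2) / (∫ x, ‖φ x‖^2) }

/-- Ω has a smooth boundary: it is a sublevel set of a smooth function whose
gradient does not vanish on the boundary. -/
def HasSmoothBoundary {d : ℕ} (Ω : Set (Euc d)) : Prop :=
  ∃ f : Euc d → ℝ, ContDiff ℝ (⊤ : ℕ∞) f ∧ Ω = {x | f x < 0} ∧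
    ∀ x ∈ frontier Ω, fderiv ℝ f x ≠ 0

/-- Uniform ellipticity: Re ∑ ε^{ij}(x) ξ_i conj(ξ_j) ≥ θ |ξ|² for a.e. x ∈ Ω. -/
def UniformlyElliptic {d : ℕ} (Ω : Set (Euc d))
    (ε : Euc d → Matrix (Fin d) (Fin d) ℂ) (θ : ℝ) : Prop :=
  ∀ᵐ x ∂(volume.restrict Ω), ∀ ξ : Fin d → ℂ,
    θ * ∑ i, ‖ξ i‖^2 ≤ (∑ i, ∑ j, ε x i j * ξ i * (starRingEnd ℂ) (ξ j)).re

/-- ε ∈ W^{1,∞}(Ω; ℂ^{d×d}) : every entry is bounded and Lipschitz on Ω. -/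
def EpsW1inf {d : ℕ} (Ω : Set (Euc d)) (ε : Euc d → Matrix (Fin d) (Fin d) ℂ) : Prop :=
  ∃ K : ℝ≥0, ∀ i j, LipschitzOnWith K (fun x => ε x i j) Ω ∧ ∀ x ∈ Ω, ‖ε x i j‖ ≤ (K : ℝ)

/-- `Lu` is a representative of  L u = -∇·(ε ∇u) + κ² u  for the H²-function U:
there are weak divergence data g i = ∂_i (∑_j ε^{ij} ∂_j u)  with
Lu = -∑ g i + κ² u  a.e. on Ω. -/
def IsLu {d : ℕ} (Ω : Set (Euc d)) (ε : Euc d → Matrix (Fin d) (Fin d) ℂ)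
    (κ2 : Euc d → ℂ) (U : SobFun d Ω 2) (Lu : Euc d → ℂ) : Prop :=
  ∃ g : Fin d → Euc d → ℂ,
    (∀ i, IsWeakDeriv Ω i (fun x => ∑ j, ε x i j * U.d1 j x) (g i)) ∧
    ∀ᵐ x ∂(volume.restrict Ω), Lu x = -(∑ i, g i x) + κ2 x * U.u x

/-- U ∈ H²(Ω) is a strong solution of the nPBE
  -∇·(ε ∇u) + κ² sinh u = f in Ω,  u = g on ∂Ω,
where the boundary datum is represented by a lift w (u - w ∈ H¹₀(Ω)). -/
def IsStrongSolNPBE {d : ℕ} (Ω : Set (Euc d)) (ε : Euc d → Matrix (Fin d) (Fin d) ℂ)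
    (κ2 : Euc d → ℂ) (f w : Euc d → ℂ) (U : SobFun d Ω 2) : Prop :=
  (∃ g : Fin d → Euc d → ℂ,
    (∀ i, IsWeakDeriv Ω i (fun x => ∑ j, ε x i j * U.d1 j x) (g i)) ∧
    ∀ᵐ x ∂(volume.restrict Ω),
      -(∑ i, g i x) + κ2 x * Complex.sinh (U.u x) = f x) ∧
  MemH10 Ω (fun x => U.u x - w x)

/-- U ∈ H¹(Ω) is a weak solution of the linear PBE L u = f with boundary lift w. -/
def IsWeakSolLinPBE {d : ℕ} (Ω : Set (Euc d)) (ε : Euc d → Matrix (Fin d) (Fin d) ℂ)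
    (κ2 : Euc d → ℂ) (f w : Euc d → ℂ) (U : SobFun d Ω 1) : Prop :=
  MemH10 Ω (fun x => U.u x - w x) ∧
  ∀ Φ : SobFun d Ω 1, MemH10 Ω Φ.u →
    (∫ x in Ω, ((∑ i, ∑ j, ε x i j * U.d1 j x * (starRingEnd ℂ) (Φ.d1 i x))
        + κ2 x * U.u x * (starRingEnd ℂ) (Φ.u x)))
      = ∫ x in Ω, f x * (starRingEnd ℂ) (Φ.u x)

/-- Taylor coefficients n_k of sinh z - z : 1/k! for odd k, 0 for even k. -/
def nk (k : ℕ) : ℝ := if Odd k then 1 / (Nat.factorial k) else 0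

/-! Homotheties centred in the convex set `Ω`, followed by mollification, make test functions dense
in `H¹₀(Ω)`, so that one may integrate by parts against its elements. Choose a smooth concave
function `η` that is positive exactly on `Ω`. On `∂Ω` the gradient of `u ∈ H² ∩ H¹₀` is parallel to
that of `η`, hence `∂ᵢη ∂ⱼu - ∂ⱼη ∂ᵢu` lies in `H¹₀`; two integrations by parts turn
`∫ η (|Δu|² - |D²u|²)` into `∫ (D²η(∇u, ∇u) - Δη |∇u|²)`, whose integrand is nonnegative because `η`
is concave. Letting `η` increase to `1` on `Ω` gives `‖D²u‖ ≤ ‖Δu‖`.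

Write `l` for the principal eigenvalue and `N`, `G`, `D`, `F` for the `L²` norms of `u`, `∇u`, `Δu`,
`L u`. The remaining ingredients are `l N² ≤ G²`, `G² ≤ D N`, the coercivity estimate
`θ G² - μ N² ≤ F N`, and `θ D ≤ F + ‖κ²‖ N + √d E G`, read off from
`ε Δu = κ² u - L u - ∇ε · ∇u`. The factor `⟨l^{1/3}⟩³` comes from `1 + l + l² ≤ (1 + l^{2/3})³`. -/

section LpApproximation

open scoped Convolution

variable {E F : Type*} [NormedAddCommGroup E] [NormedSpace ℝ E] [FiniteDimensional ℝ E]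
  [MeasurableSpace E] [BorelSpace E] [NormedAddCommGroup F]
  {μ : Measure E} [μ.IsAddHaarMeasure] {p : ℝ≥0∞}

lemma enorm_integral_rpow_le_lintegral {α : Type*} [MeasurableSpace α] [NormedSpace ℝ F]
    {P : Measure α} [IsProbabilityMeasure P] {f : α → F} (hf : AEStronglyMeasurable f P)
    {q : ℝ} (hq : 1 ≤ q) : ‖∫ y, f y ∂P‖ₑ ^ q ≤ ∫⁻ y, ‖f y‖ₑ ^ q ∂P := by
  have hq0 : 0 < q := one_pos.trans_le hq
  have hmono := eLpNorm'_le_eLpNorm'_of_exponent_le one_pos hq P hf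
  simp only [eLpNorm', ENNReal.rpow_one, div_one] at hmono
  calc ‖∫ y, f y ∂P‖ₑ ^ q ≤ ((∫⁻ y, ‖f y‖ₑ ^ q ∂P) ^ (1 / q)) ^ q := by
        gcongr
        exact (enorm_integral_le_lintegral_enorm f).trans hmono
    _ = ∫⁻ y, ‖f y‖ₑ ^ q ∂P := by
        rw [← ENNReal.rpow_mul, one_div_mul_cancel hq0.ne', ENNReal.rpow_one]

lemma eLpNorm_integral_le_of_ae_eLpNorm_le {α β : Type*} [MeasurableSpace α] [MeasurableSpace β]
    [NormedSpace ℝ F] {μ : Measure α} [SFinite μ] {P : Measure β} [IsProbabilityMeasure P]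
    {f : α → β → F} (hf : AEStronglyMeasurable (Function.uncurry f) (μ.prod P))
    (hp : 1 ≤ p) (hp' : p ≠ ∞) {c : ℝ≥0∞} (hc : ∀ᵐ y ∂P, eLpNorm (fun x => f x y) p μ ≤ c) :
    eLpNorm (fun x => ∫ y, f x y ∂P) p μ ≤ c := by
  have hp0 : p ≠ 0 := (one_pos.trans_le hp).ne'
  have hq : 1 ≤ p.toReal := by simpa using ENNReal.toReal_mono hp' hp
  have hq0 : 0 < p.toReal := one_pos.trans_le hq
  simp only [eLpNorm_eq_lintegral_rpow_enorm_toReal hp0 hp', one_div,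
    ENNReal.rpow_inv_le_iff hq0] at hc ⊢
  calc ∫⁻ x, ‖∫ y, f x y ∂P‖ₑ ^ p.toReal ∂μ
      ≤ ∫⁻ x, ∫⁻ y, ‖f x y‖ₑ ^ p.toReal ∂P ∂μ := by
        refine lintegral_mono_ae ?_
        filter_upwards [hf.prodMk_left] with x hx
        exact enorm_integral_rpow_le_lintegral hx hq
    _ = ∫⁻ y, ∫⁻ x, ‖f x y‖ₑ ^ p.toReal ∂μ ∂P :=
        lintegral_lintegral_swap (hf.enorm.pow_const _)
    _ ≤ ∫⁻ _, c ^ p.toReal ∂P := lintegral_mono_ae hc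
    _ = c ^ p.toReal := by simp

lemma tendsto_eLpNorm_comp_sub_const_sub (hp : 1 ≤ p) (hp' : p ≠ ∞) {f : E → F}
    (hf : MemLp f p μ) :
    Tendsto (fun y => eLpNorm (fun x => f (x - y) - f x) p μ) (𝓝 0) (𝓝 0) := by
  have : Fact (1 ≤ p) := ⟨hp⟩
  let T : C(E, C(E, E)) := ContinuousMap.curry ⟨fun z : E × E => z.2 - z.1, by fun_prop⟩
  have hpres (y : E) : MeasurePreserving (T y) μ μ := measurePreserving_sub_right μ y
  have hT : Continuous fun y => Lp.compMeasurePreserving (T y) (hpres y) (hf.toLp f) :=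
    continuous_const.compMeasurePreservingLp T.continuous hpres hp'
  have hlim := (hT.tendsto 0).edist (tendsto_const_nhds (x := hf.toLp f))
  have hT0 : Lp.compMeasurePreserving (T 0) (hpres 0) (hf.toLp f) = hf.toLp f := by
    ext1
    refine (Lp.coeFn_compMeasurePreserving _ (hpres 0)).trans (Eventually.of_forall fun x => ?_)
    simp [T]
  rw [hT0, edist_self] at hlim
  refine hlim.congr fun y => ?_
  rw [Lp.toLp_compMeasurePreserving hf (hpres y), Lp.edist_toLp_toLp]
  rfl

lemma convolution_normed_sub_eq_integral [NormedSpace ℝ F] [CompleteSpace F] [HasContDiffBump E]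
    (φ : ContDiffBump (0 : E)) {f : E → F} (hf : LocallyIntegrable f μ) (x : E) :
    (φ.normed μ ⋆[ContinuousLinearMap.lsmul ℝ ℝ, μ] f) x - f x =
      ∫ y, (f (x - y) - f x) ∂μ.withDensity fun y => ENNReal.ofReal (φ.normed μ y) := by
  have hint : Integrable (fun y => φ.normed μ y • f (x - y)) μ :=
    φ.hasCompactSupport_normed.convolutionExists_left (ContinuousLinearMap.lsmul ℝ ℝ)
      φ.continuous_normed hf x
  rw [integral_withDensity_eq_integral_toReal_smul φ.continuous_normed.measurable.ennreal_ofReal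
    (Eventually.of_forall fun _ => ENNReal.ofReal_lt_top)]
  simp only [ENNReal.toReal_ofReal (φ.nonneg_normed _), smul_sub]
  rw [integral_sub hint (φ.integrable_normed.smul_const _), φ.integral_normed_smul]
  rfl

lemma exists_eLpNorm_convolution_normed_sub_le [NormedSpace ℝ F] [CompleteSpace F]
    [HasContDiffBump E] (hp : 1 ≤ p) (hp' : p ≠ ∞) {f : E → F} (hf : MemLp f p μ) {e : ℝ≥0∞}
    (he : e ≠ 0) :
    ∃ δ > 0, ∀ φ : ContDiffBump (0 : E), φ.rOut < δ →
      eLpNorm (fun x => (φ.normed μ ⋆[ContinuousLinearMap.lsmul ℝ ℝ, μ] f) x - f x) p μ ≤ e := by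
  obtain ⟨δ, hδ, hball⟩ := Metric.eventually_nhds_iff_ball.1
    ((tendsto_eLpNorm_comp_sub_const_sub hp hp' hf).eventually_le_const (pos_iff_ne_zero.2 he))
  refine ⟨δ, hδ, fun φ hφ => ?_⟩
  let P : Measure E := μ.withDensity fun y => ENNReal.ofReal (φ.normed μ y)
  have hmeas : Measurable fun y => ENNReal.ofReal (φ.normed μ y) :=
    φ.continuous_normed.measurable.ennreal_ofReal
  have : IsProbabilityMeasure P := ⟨by
    rw [withDensity_apply _ MeasurableSet.univ, Measure.restrict_univ,
      ← ofReal_integral_eq_lintegral_ofReal φ.integrable_normed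
        (Eventually.of_forall φ.nonneg_normed), φ.integral_normed, ENNReal.ofReal_one]⟩
  simp only [convolution_normed_sub_eq_integral φ (hf.locallyIntegrable hp)]
  refine eLpNorm_integral_le_of_ae_eLpNorm_le ?_ hp hp' ?_
  · have hprod : AEStronglyMeasurable (Function.uncurry fun x y => f (x - y) - f x) (μ.prod μ) :=
      (hf.1.comp_quasiMeasurePreserving (quasiMeasurePreserving_sub μ μ)).sub hf.1.comp_fst
    exact hprod.mono_ac (Measure.AbsolutelyContinuous.rfl.prod
      (withDensity_absolutelyContinuous _ _))
  · rw [ae_withDensity_iff hmeas]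
    refine Eventually.of_forall fun y hy => hball y ?_
    have hsupp : y ∈ Metric.ball (0 : E) φ.rOut := by
      rw [← φ.support_normed_eq (μ := μ)]
      exact fun h0 => hy (by simp [h0])
    exact Metric.ball_subset_ball hφ.le hsupp

lemma map_homothety_le (x₀ : E) {s : ℝ} (hs : 1 ≤ s) :
    μ.map (AffineMap.homothety x₀ s) ≤ μ := by
  have hs0 : s ≠ 0 := (one_pos.trans_le hs).ne'
  refine Measure.le_iff.2 fun A hA => ?_
  have himage : AffineMap.homothety x₀ s '' (AffineMap.homothety x₀ s ⁻¹' A) = A :=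
    image_preimage_eq A (AffineEquiv.homothetyUnitsMulHom x₀ (Units.mk0 s hs0)).surjective
  rw [Measure.map_apply (AffineMap.homothety_continuous x₀ s).measurable hA]
  calc μ (AffineMap.homothety x₀ s ⁻¹' A)
      ≤ ENNReal.ofReal |s ^ Module.finrank ℝ E| * μ (AffineMap.homothety x₀ s ⁻¹' A) :=
        le_mul_of_one_le_left zero_le (by
          rw [ENNReal.one_le_ofReal, abs_of_nonneg (by positivity)]
          exact one_le_pow₀ hs)
    _ = μ A := by rw [← Measure.addHaar_image_homothety, himage]

/- Composition with `T i` is then a contraction of `Lᵖ`, so only a dense class has to be tested. -/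
lemma tendsto_eLpNorm_comp_sub_of_map_le {α ι : Type*} [TopologicalSpace α] [NormalSpace α]
    [WeaklyLocallyCompactSpace α] [R1Space α] [MeasurableSpace α] [BorelSpace α] {μ : Measure α}
    [μ.Regular] [NormedSpace ℝ F] {l : Filter ι} {T : ι → α → α}
    (hT : ∀ᶠ i in l, AEMeasurable (T i) μ ∧ μ.map (T i) ≤ μ)
    (hcomp : ∀ g : α → F, Continuous g → HasCompactSupport g →
      Tendsto (fun i => eLpNorm (fun x => g (T i x) - g x) p μ) l (𝓝 0))
    (hp : 1 ≤ p) (hp' : p ≠ ∞) {f : α → F} (hf : MemLp f p μ) :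
    Tendsto (fun i => eLpNorm (fun x => f (T i x) - f x) p μ) l (𝓝 0) := by
  refine ENNReal.tendsto_nhds_zero.2 fun e he => ?_
  have he3 : e / 3 ≠ 0 := by simpa using he.ne'
  obtain ⟨g, hgc, hfg, hg, hgm⟩ := hf.exists_hasCompactSupport_eLpNorm_sub_le hp' he3
  filter_upwards [hT, (hcomp g hg hgc).eventually_le_const (pos_iff_ne_zero.2 he3)]
    with i ⟨hTm, hTμ⟩ hgi
  have hd : MemLp (f - g) p (μ.map (T i)) := (hf.sub hgm).mono_measure hTμ
  have hdT : AEStronglyMeasurable ((f - g) ∘ T i) μ := hd.1.comp_aemeasurable hTm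
  have hgT : AEStronglyMeasurable (fun x => g (T i x) - g x) μ :=
    ((hgm.1.mono_measure hTμ).comp_aemeasurable hTm).sub hgm.1
  have hcontr : eLpNorm ((f - g) ∘ T i) p μ ≤ e / 3 :=
    (eLpNorm_map_measure hd.1 hTm).symm.trans_le ((eLpNorm_mono_measure _ hTμ).trans hfg)
  have hsplit : (fun x => f (T i x) - f x) =
      (f - g) ∘ T i + ((fun x => g (T i x) - g x) + (g - f)) := by
    ext x; simp
  calc eLpNorm (fun x => f (T i x) - f x) p μ
      ≤ eLpNorm ((f - g) ∘ T i) p μ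
          + (eLpNorm (fun x => g (T i x) - g x) p μ + eLpNorm (g - f) p μ) := by
        rw [hsplit]
        exact (eLpNorm_add_le hdT (hgT.add (hgm.1.sub hf.1)) hp).trans
          (add_le_add_right (eLpNorm_add_le hgT (hgm.1.sub hf.1) hp) _)
    _ ≤ e / 3 + (e / 3 + e / 3) := by
        rw [eLpNorm_sub_comm g f]
        gcongr
    _ = e := by rw [← add_assoc, ENNReal.add_thirds]

lemma tendsto_eLpNorm_sub_of_tendstoUniformly {α ι : Type*} [MeasurableSpace α] {μ : Measure α}
    {l : Filter ι} {f : ι → α → F} {g : α → F} {s : Set α} (hp' : p ≠ ∞)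
    (hfg : TendstoUniformly f g l) (hs : MeasurableSet s) (hμs : μ s ≠ ∞)
    (hfs : ∀ᶠ i in l, (f i).support ⊆ s) (hgs : g.support ⊆ s) :
    Tendsto (fun i => eLpNorm (f i - g) p μ) l (𝓝 0) := by
  have hfin : μ s ^ (1 / p.toReal) ≠ ∞ := ENNReal.rpow_ne_top_of_nonneg (by positivity) hμs
  refine ENNReal.tendsto_nhds_zero.2 fun e he => ?_
  have hlim : Tendsto (fun η => ENNReal.ofReal η * μ s ^ (1 / p.toReal)) (𝓝[>] 0) (𝓝 0) := by
    have hid : Tendsto (fun η : ℝ => η) (𝓝[>] 0) (𝓝 0) := nhdsWithin_le_nhds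
    simpa using ENNReal.Tendsto.mul_const (ENNReal.tendsto_ofReal hid) (Or.inr hfin)
  obtain ⟨η, hηe, hη⟩ := ((hlim.eventually_le_const he).and self_mem_nhdsWithin).exists
  filter_upwards [hfs, Metric.tendstoUniformly_iff.1 hfg η hη] with i hi hdist
  refine (eLpNorm_sub_le_of_dist_bdd μ hp' hs (le_of_lt hη) (fun x => ?_) hi hgs).trans hηe
  rw [dist_comm]
  exact (hdist x).le

lemma tendsto_eLpNorm_comp_homothety_sub_of_hasCompactSupport (x₀ : E) (hp' : p ≠ ∞) {g : E → F}
    (hg : Continuous g) (hgc : HasCompactSupport g) :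
    Tendsto (fun s => eLpNorm (fun x => g (AffineMap.homothety x₀ s x) - g x) p μ)
      (𝓝[≥] (1 : ℝ)) (𝓝 0) := by
  obtain ⟨R, -, hsupp⟩ := hgc.isCompact.isBounded.subset_ball_lt 0 x₀
  have hgs : g.support ⊆ Metric.ball x₀ R := (subset_tsupport g).trans hsupp
  have hgTs {s : ℝ} (hs : 1 ≤ s) {x : E} (hx : g (AffineMap.homothety x₀ s x) ≠ 0) :
      x ∈ Metric.ball x₀ R := by
    have hdist := Metric.mem_ball'.1 (hgs hx)
    rw [dist_center_homothety, Real.norm_of_nonneg (by positivity)] at hdist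
    exact Metric.mem_ball'.2 ((le_mul_of_one_le_left dist_nonneg hs).trans_lt hdist)
  refine tendsto_eLpNorm_sub_of_tendstoUniformly hp' (s := Metric.ball x₀ R) ?_
    Metric.isOpen_ball.measurableSet measure_ball_lt_top.ne ?_ hgs
  · refine Metric.tendstoUniformly_iff.2 fun η hη => ?_
    obtain ⟨δ, hδ, huc⟩ :=
      Metric.uniformContinuous_iff.1 (hgc.uniformContinuous_of_continuous hg) η hη
    have hnear : ∀ᶠ s in 𝓝[≥] (1 : ℝ), ‖1 - s‖ * R < δ :=
      tendsto_nhdsWithin_of_tendsto_nhds (Continuous.tendsto' (by fun_prop) 1 0 (by simp))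
        |>.eventually_lt_const hδ
    filter_upwards [self_mem_nhdsWithin, hnear] with s hs hsδ x
    by_cases hx : x ∈ Metric.ball x₀ R
    · refine huc ?_
      rw [dist_comm, dist_homothety_self]
      exact (mul_le_mul_of_nonneg_left (Metric.mem_ball'.1 hx).le (norm_nonneg _)).trans_lt hsδ
    · rw [of_not_not (mt (@hgs x) hx), of_not_not (mt (hgTs hs) hx), dist_self]
      exact hη
  · filter_upwards [self_mem_nhdsWithin] with s hs x hx
    exact hgTs hs hx

lemma tendsto_eLpNorm_comp_homothety_sub [NormedSpace ℝ F] (x₀ : E) (hp : 1 ≤ p) (hp' : p ≠ ∞)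
    {f : E → F} (hf : MemLp f p μ) :
    Tendsto (fun s => eLpNorm (fun x => f (AffineMap.homothety x₀ s x) - f x) p μ)
      (𝓝[≥] (1 : ℝ)) (𝓝 0) := by
  refine tendsto_eLpNorm_comp_sub_of_map_le ?_
    (fun g => tendsto_eLpNorm_comp_homothety_sub_of_hasCompactSupport x₀ hp') hp hp' hf
  filter_upwards [self_mem_nhdsWithin] with s hs
  exact ⟨(AffineMap.homothety_continuous x₀ s).aemeasurable, map_homothety_le x₀ hs⟩

end LpApproximation

section Homothety

variable {E : Type*} [NormedAddCommGroup E] [NormedSpace ℝ E] [FiniteDimensional ℝ E]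
  [MeasurableSpace E] [BorelSpace E] {μ : Measure E} [μ.IsAddHaarMeasure]

lemma integral_comp_homothety {F : Type*} [NormedAddCommGroup F] [NormedSpace ℝ F] (f : E → F)
    (x₀ : E) (s : ℝ) :
    ∫ x, f (AffineMap.homothety x₀ s x) ∂μ = |(s ^ Module.finrank ℝ E)⁻¹| • ∫ x, f x ∂μ := by
  calc ∫ x, f (AffineMap.homothety x₀ s x) ∂μ = ∫ x, f (s • (x - x₀) + x₀) ∂μ := rfl
    _ = ∫ x, f (s • x + x₀) ∂μ := integral_sub_right_eq_self (fun x => f (s • x + x₀)) x₀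
    _ = |(s ^ Module.finrank ℝ E)⁻¹| • ∫ x, f (x + x₀) ∂μ :=
        Measure.integral_comp_smul μ (fun x => f (x + x₀)) s
    _ = |(s ^ Module.finrank ℝ E)⁻¹| • ∫ x, f x ∂μ := by rw [integral_add_right_eq_self]

lemma memLp_comp_homothety {F : Type*} [NormedAddCommGroup F] {p : ℝ≥0∞} {f : E → F}
    (hf : MemLp f p μ) (x₀ : E) {s : ℝ} (hs : 1 ≤ s) :
    MemLp (fun x => f (AffineMap.homothety x₀ s x)) p μ :=
  (hf.mono_measure (map_homothety_le x₀ hs)).comp_of_map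
    (AffineMap.homothety_continuous x₀ s).aemeasurable

end Homothety

section ZeroIntegral

variable {α E : Type*} [MeasurableSpace α] {μ : Measure α} [NormedAddCommGroup E]
  [NormedSpace ℝ E] {F G : α → E}

/-- `F` is integrable with integral zero. Integration by parts is expressed in this form, so that
identities between integrals can be combined by pointwise algebra on the integrands. -/
structure HasZeroIntegral (μ : Measure α) (F : α → E) : Prop where
  integrable : Integrable F μ
  integral_eq_zero : ∫ x, F x ∂μ = 0

namespace HasZeroIntegral

lemma congr (hF : HasZeroIntegral μ F) (h : F =ᵐ[μ] G) : HasZeroIntegral μ G :=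
  ⟨hF.integrable.congr h, integral_congr_ae h ▸ hF.integral_eq_zero⟩

lemma add (hF : HasZeroIntegral μ F) (hG : HasZeroIntegral μ G) :
    HasZeroIntegral μ fun x => F x + G x :=
  ⟨hF.integrable.add hG.integrable, by
    rw [integral_add hF.integrable hG.integrable, hF.integral_eq_zero, hG.integral_eq_zero,
      add_zero]⟩

lemma sub (hF : HasZeroIntegral μ F) (hG : HasZeroIntegral μ G) :
    HasZeroIntegral μ fun x => F x - G x :=
  ⟨hF.integrable.sub hG.integrable, by
    rw [integral_sub hF.integrable hG.integrable, hF.integral_eq_zero, hG.integral_eq_zero,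
      sub_zero]⟩

lemma sum {ι : Type*} {s : Finset ι} {F : ι → α → E} (hF : ∀ i ∈ s, HasZeroIntegral μ (F i)) :
    HasZeroIntegral μ fun x => ∑ i ∈ s, F i x :=
  ⟨integrable_finsetSum s fun i hi => (hF i hi).integrable, by
    rw [integral_finsetSum s fun i hi => (hF i hi).integrable,
      Finset.sum_eq_zero fun i hi => (hF i hi).integral_eq_zero]⟩

end HasZeroIntegral

end ZeroIntegral

section PartialDerivatives

variable {d : ℕ} {φ ψ : Euc d → ℂ} {x : Euc d}

lemma contDiff_pd (hφ : ContDiff ℝ (⊤ : ℕ∞) φ) (i : Fin d) : ContDiff ℝ (⊤ : ℕ∞) (pd i φ) :=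
  (hφ.fderiv_right (m := (⊤ : ℕ∞)) (by simp)).clm_apply contDiff_const

lemma pd_mul (hφ : DifferentiableAt ℝ φ x) (hψ : DifferentiableAt ℝ ψ x) (i : Fin d) :
    pd i (fun y => φ y * ψ y) x = pd i φ x * ψ x + φ x * pd i ψ x := by
  simp only [pd, (hφ.hasFDerivAt.fun_mul hψ.hasFDerivAt).fderiv, add_apply,
    smul_apply, smul_eq_mul]
  ring

lemma pd_conj (hφ : DifferentiableAt ℝ φ x) (i : Fin d) :
    pd i (fun y => (starRingEnd ℂ) (φ y)) x = (starRingEnd ℂ) (pd i φ x) := by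
  have h : HasFDerivAt (fun y => (starRingEnd ℂ) (φ y)) _ x :=
    Complex.conjCLE.toContinuousLinearMap.hasFDerivAt.comp x hφ.hasFDerivAt
  simp [pd, h.fderiv]

lemma pd_ofReal {f : Euc d → ℝ} (hf : DifferentiableAt ℝ f x) (i : Fin d) :
    pd i (fun y => (f y : ℂ)) x = (fderiv ℝ f x (EuclideanSpace.single i (1 : ℝ)) : ℂ) := by
  have h : HasFDerivAt (fun y => (f y : ℂ)) _ x :=
    Complex.ofRealCLM.hasFDerivAt.comp x hf.hasFDerivAt
  simp [pd, h.fderiv]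

lemma pd_pd_eq_fderiv_fderiv (hφ : DifferentiableAt ℝ (fderiv ℝ φ) x) (i j : Fin d) :
    pd i (pd j φ) x = fderiv ℝ (fderiv ℝ φ) x (EuclideanSpace.single i (1 : ℝ))
      (EuclideanSpace.single j (1 : ℝ)) := by
  have h : HasFDerivAt (pd j φ) _ x := hφ.hasFDerivAt.clm_apply (hasFDerivAt_const _ x)
  simp [pd, h.fderiv]

lemma pd_comm (hφ : ContDiff ℝ (⊤ : ℕ∞) φ) (i j : Fin d) (x : Euc d) :
    pd i (pd j φ) x = pd j (pd i φ) x := by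
  have hdiff : DifferentiableAt ℝ (fderiv ℝ φ) x :=
    (hφ.fderiv_right (m := (⊤ : ℕ∞)) (by simp)).differentiable (by simp) x
  have hsymm : IsSymmSndFDerivAt ℝ φ x :=
    hφ.contDiffAt.isSymmSndFDerivAt (by simpa using WithTop.coe_le_coe.2 (le_top (a := (2 : ℕ∞))))
  rw [pd_pd_eq_fderiv_fderiv hdiff, pd_pd_eq_fderiv_fderiv hdiff, hsymm]

end PartialDerivatives

section TestFunctions

variable {d : ℕ} {Ω Ω' : Set (Euc d)} {φ e : Euc d → ℂ}

lemma IsTestFun.differentiable (hφ : IsTestFun Ω φ) : Differentiable ℝ φ :=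
  hφ.1.differentiable (by simp)

lemma IsTestFun.mono (hφ : IsTestFun Ω φ) (h : Ω ⊆ Ω') : IsTestFun Ω' φ :=
  ⟨hφ.1, hφ.2.1, hφ.2.2.trans h⟩

lemma IsTestFun.eq_zero_of_notMem (hφ : IsTestFun Ω φ) {x : Euc d} (hx : x ∉ Ω) : φ x = 0 :=
  image_eq_zero_of_notMem_tsupport fun h => hx (hφ.2.2 h)

lemma IsTestFun.pd (hφ : IsTestFun Ω φ) (i : Fin d) : IsTestFun Ω (pd i φ) :=
  ⟨contDiff_pd hφ.1 i, hφ.2.1.fderiv_apply ℝ _,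
    (tsupport_fderiv_apply_subset ℝ _).trans hφ.2.2⟩

lemma IsTestFun.mul_left (hφ : IsTestFun Ω φ) (he : ContDiff ℝ (⊤ : ℕ∞) e) :
    IsTestFun Ω fun x => e x * φ x :=
  ⟨he.mul hφ.1, hφ.2.1.mul_left, (tsupport_mul_subset_right (f := e) (g := φ)).trans hφ.2.2⟩

lemma IsTestFun.conj (hφ : IsTestFun Ω φ) : IsTestFun Ω fun x => (starRingEnd ℂ) (φ x) :=
  ⟨Complex.conjCLE.contDiff.comp hφ.1, hφ.2.1.comp_left (g := starRingEnd ℂ) (map_zero _),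
    (tsupport_comp_subset (g := starRingEnd ℂ) (map_zero _) φ).trans hφ.2.2⟩

lemma isTestFun_ofReal {f : Euc d → ℝ} (hf : ContDiff ℝ (⊤ : ℕ∞) f) (hfc : HasCompactSupport f)
    (hfΩ : tsupport f ⊆ Ω) : IsTestFun Ω fun x => (f x : ℂ) :=
  ⟨Complex.ofRealCLM.contDiff.comp hf, hfc.comp_left (g := Complex.ofReal) Complex.ofReal_zero,
    (tsupport_comp_subset (g := Complex.ofReal) Complex.ofReal_zero f).trans hfΩ⟩

lemma IsTestFun.memL2 (hφ : IsTestFun Ω φ) : MemL2 Ω' φ :=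
  (hφ.1.continuous.memLp_of_hasCompactSupport hφ.2.1).restrict Ω'

lemma IsTestFun.setIntegral_mul (hφ : IsTestFun Ω φ) (f : Euc d → ℂ) :
    ∫ x in Ω, f x * φ x = ∫ x, f x * φ x :=
  setIntegral_eq_integral_of_forall_compl_eq_zero fun x hx => by
    rw [hφ.eq_zero_of_notMem hx, mul_zero]

end TestFunctions

section SquareIntegrable

variable {d : ℕ} {Ω : Set (Euc d)} {f g : Euc d → ℂ}

lemma MemL2.integrable_mul (hf : MemL2 Ω f) (hg : MemL2 Ω g) :
    Integrable (fun x => f x * g x) (volume.restrict Ω) :=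
  MemLp.integrable_mul (p := 2) (q := 2) hf hg

lemma MemL2.conj (hf : MemL2 Ω f) : MemL2 Ω fun x => (starRingEnd ℂ) (f x) := hf.star

lemma MemL2.memLp_top_mul (hf : MemL2 Ω f) (hg : MemLp g ∞ (volume.restrict Ω)) :
    MemL2 Ω fun x => g x * f x := hf.mul' hg

lemma memLp_top_restrict_of_continuous (hΩ : Bornology.IsBounded Ω) (hg : Continuous g) :
    MemLp g ∞ (volume.restrict Ω) := by
  obtain ⟨C, hC⟩ := hΩ.isCompact_closure.exists_bound_of_continuousOn hg.continuousOn
  refine MemLp.mono_measure (Measure.restrict_mono subset_closure le_rfl)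
    (memLp_top_of_bound hg.aestronglyMeasurable C ?_)
  filter_upwards [ae_restrict_mem isClosed_closure.measurableSet] with x hx using hC x hx

lemma MemL2.locallyIntegrableOn (hf : MemL2 Ω f) : LocallyIntegrableOn f Ω volume := fun x _ =>
  ⟨Ω ∩ Metric.ball x 1, inter_mem_nhdsWithin _ (Metric.ball_mem_nhds x one_pos), by
    have : IsFiniteMeasure ((volume : Measure (Euc d)).restrict (Ω ∩ Metric.ball x 1)) :=
      ⟨by simpa using (measure_mono inter_subset_right).trans_lt measure_ball_lt_top⟩
    exact (MemLp.mono_measure (Measure.restrict_mono inter_subset_left le_rfl) hf).integrable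
      one_le_two⟩

lemma ae_restrict_eq_zero_of_integral_mul_isTestFun (hΩ : IsOpen Ω)
    (hf : LocallyIntegrableOn f Ω volume)
    (h : ∀ φ, IsTestFun Ω φ → ∫ x in Ω, f x * φ x = 0) : ∀ᵐ x ∂volume.restrict Ω, f x = 0 := by
  refine (ae_restrict_iff' hΩ.measurableSet).2
    (hΩ.ae_eq_zero_of_integral_contDiff_smul_eq_zero hf fun g hg hgc hgΩ => ?_)
  have htest : IsTestFun Ω fun x => (g x : ℂ) := isTestFun_ofReal hg hgc hgΩ
  rw [← h _ htest, htest.setIntegral_mul]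
  simp only [Complex.real_smul, mul_comm]

lemma MemL2.tendsto_integral_mul {ι : Type*} {l : Filter ι} {G : ι → Euc d → ℂ} (hf : MemL2 Ω f)
    (hg : MemL2 Ω g) (hG : ∀ n, MemL2 Ω (G n))
    (h : Tendsto (fun n => eLpNorm (fun x => G n x - g x) 2 (volume.restrict Ω)) l (𝓝 0)) :
    Tendsto (fun n => ∫ x in Ω, f x * G n x) l (𝓝 (∫ x in Ω, f x * g x)) := by
  refine tendsto_integral_of_L1 _ (hf.integrable_mul hg).aestronglyMeasurable
    (Eventually.of_forall fun n => hf.integrable_mul (hG n)) ?_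
  have hlim : Tendsto (fun n => eLpNorm f 2 (volume.restrict Ω) *
      eLpNorm (fun x => G n x - g x) 2 (volume.restrict Ω)) l (𝓝 0) := by
    simpa using ENNReal.Tendsto.const_mul h (Or.inr hf.2.ne)
  refine tendsto_of_tendsto_of_tendsto_of_le_of_le tendsto_const_nhds hlim
    (fun _ => zero_le) fun n => ?_
  have hholder := eLpNorm_smul_le_mul_eLpNorm (p := 2) (q := 2) (r := 1)
    ((hG n).1.sub hg.1) hf.1
  rw [eLpNorm_one_eq_lintegral_enorm] at hholder
  simp only [Pi.smul_apply', smul_eq_mul, Pi.sub_apply, mul_sub] at hholder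
  exact hholder

lemma MemL2.tendsto_L2N {ι : Type*} {l : Filter ι} {G : ι → Euc d → ℂ} (hg : MemL2 Ω g)
    (hG : ∀ n, MemL2 Ω (G n))
    (h : Tendsto (fun n => eLpNorm (fun x => G n x - g x) 2 (volume.restrict Ω)) l (𝓝 0)) :
    Tendsto (fun n => L2N Ω (G n)) l (𝓝 (L2N Ω g)) := by
  have hnorm (u : Euc d → ℂ) (hu : MemL2 Ω u) : ‖hu.toLp‖ = L2N Ω u := Lp.norm_toLp u hu
  simpa only [hnorm] using ((Lp.tendsto_Lp_iff_tendsto_eLpNorm'' G hG g hg).2 h).norm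

end SquareIntegrable

section WeakGradient

variable {d : ℕ} {Ω Ω' Ω'' : Set (Euc d)} {u v e : Euc d → ℂ} {u' v' : Fin d → Euc d → ℂ}

/-- `u' i` is the `i`-th weak partial derivative of `u` on `Ω`, tested against functions supported
in `Ω'`, and all of them are square integrable. The choice `Ω' = Ω` gives `H¹(Ω)`, and `Ω' = univ`
expresses that the extension of `u` by zero lies in `H¹(ℝ^d)`, that is `u ∈ H¹₀(Ω)`. -/
structure HasL2Grad (Ω Ω' : Set (Euc d)) (u : Euc d → ℂ) (u' : Fin d → Euc d → ℂ) : Prop where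
  memL2 : MemL2 Ω u
  memL2_grad : ∀ i, MemL2 Ω (u' i)
  integral_mul_pd : ∀ i φ, IsTestFun Ω' φ →
    ∫ x in Ω, u x * pd i φ x = -∫ x in Ω, u' i x * φ x

namespace HasL2Grad

lemma isWeakDeriv (h : HasL2Grad Ω Ω u u') (i : Fin d) : IsWeakDeriv Ω i u (u' i) :=
  h.integral_mul_pd i

lemma mono (h : HasL2Grad Ω Ω' u u') (hΩ : Ω'' ⊆ Ω') : HasL2Grad Ω Ω'' u u' :=
  ⟨h.memL2, h.memL2_grad, fun i φ hφ => h.integral_mul_pd i φ (hφ.mono hΩ)⟩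

lemma hasZeroIntegral (h : HasL2Grad Ω Ω' u u') (i : Fin d) {φ : Euc d → ℂ}
    (hφ : IsTestFun Ω' φ) :
    HasZeroIntegral (volume.restrict Ω) fun x => u x * pd i φ x + u' i x * φ x :=
  have hint := h.memL2.integrable_mul (hφ.pd i).memL2
  have hint' := (h.memL2_grad i).integrable_mul hφ.memL2
  ⟨hint.add hint', by rw [integral_add hint hint', h.integral_mul_pd i φ hφ, neg_add_cancel]⟩

lemma of_integral_eq_zero (hu : MemL2 Ω u) (hu' : ∀ i, MemL2 Ω (u' i))
    (h : ∀ i φ, IsTestFun Ω' φ → ∫ x in Ω, (u x * pd i φ x + u' i x * φ x) = 0) :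
    HasL2Grad Ω Ω' u u' := by
  refine ⟨hu, hu', fun i φ hφ => eq_neg_of_add_eq_zero_left ?_⟩
  rw [← integral_add (hu.integrable_mul (hφ.pd i).memL2) ((hu' i).integrable_mul hφ.memL2),
    h i φ hφ]

lemma sub (hu : HasL2Grad Ω Ω' u u') (hv : HasL2Grad Ω Ω' v v') :
    HasL2Grad Ω Ω' (fun x => u x - v x) fun i x => u' i x - v' i x :=
  of_integral_eq_zero (MemLp.sub hu.memL2 hv.memL2)
    (fun i => MemLp.sub (hu.memL2_grad i) (hv.memL2_grad i)) fun i φ hφ =>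
    (((hu.hasZeroIntegral i hφ).sub (hv.hasZeroIntegral i hφ)).congr
      (Eventually.of_forall fun x => by ring)).integral_eq_zero

lemma conj (h : HasL2Grad Ω Ω' u u') :
    HasL2Grad Ω Ω' (fun x => (starRingEnd ℂ) (u x)) fun i x => (starRingEnd ℂ) (u' i x) := by
  refine ⟨h.memL2.conj, fun i => (h.memL2_grad i).conj, fun i φ hφ => ?_⟩
  have hconj := congrArg (starRingEnd ℂ) (h.integral_mul_pd i _ hφ.conj)
  rw [map_neg, ← integral_conj, ← integral_conj] at hconj
  simpa [pd_conj (hφ.differentiable _)] using hconj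

lemma smooth_mul (h : HasL2Grad Ω Ω' u u') (hΩ : Bornology.IsBounded Ω)
    (he : ContDiff ℝ (⊤ : ℕ∞) e) :
    HasL2Grad Ω Ω' (fun x => e x * u x) fun i x => pd i e x * u x + e x * u' i x := by
  have hbdd {g : Euc d → ℂ} (hg : Continuous g) : MemLp g ∞ (volume.restrict Ω) :=
    memLp_top_restrict_of_continuous hΩ hg
  refine of_integral_eq_zero (h.memL2.memLp_top_mul (hbdd he.continuous))
    (fun i => MemLp.add (h.memL2.memLp_top_mul (hbdd (contDiff_pd he i).continuous))
      ((h.memL2_grad i).memLp_top_mul (hbdd he.continuous))) fun i φ hφ => ?_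
  refine ((h.hasZeroIntegral i (hφ.mul_left he)).congr
    (Eventually.of_forall fun x => ?_)).integral_eq_zero
  simp only [pd_mul (he.differentiable (by simp) x) (hφ.differentiable x)]
  ring

lemma indicator (h : HasL2Grad Ω univ u u') (hΩ : MeasurableSet Ω) :
    HasL2Grad univ univ (Ω.indicator u) fun i => Ω.indicator (u' i) := by
  have hmem {f : Euc d → ℂ} (hf : MemL2 Ω f) : MemL2 univ (Ω.indicator f) :=
    ((memLp_indicator_iff_restrict hΩ).2 hf).restrict univ
  refine ⟨hmem h.memL2, fun i => hmem (h.memL2_grad i), fun i φ hφ => ?_⟩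
  simpa only [Measure.restrict_univ, ← indicator_mul_left, integral_indicator hΩ]
    using h.integral_mul_pd i φ hφ

lemma comp_homothety (h : HasL2Grad univ univ u u') (x₀ : Euc d) {s : ℝ} (hs : 1 ≤ s) :
    HasL2Grad univ univ (fun x => (s : ℂ)⁻¹ * u (AffineMap.homothety x₀ s x))
      fun i x => u' i (AffineMap.homothety x₀ s x) := by
  have hs0 : s ≠ 0 := (one_pos.trans_le hs).ne'
  have hmem {f : Euc d → ℂ} (hf : MemL2 univ f) :
      MemL2 univ fun x => f (AffineMap.homothety x₀ s x) := by
    rw [MemL2, Measure.restrict_univ] at hf ⊢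
    exact memLp_comp_homothety hf x₀ hs
  refine of_integral_eq_zero ((hmem h.memL2).const_mul _) (fun i => hmem (h.memL2_grad i))
    fun i φ hφ => ?_
  let T : Euc d ≃ᴬ[ℝ] Euc d :=
    (AffineEquiv.homothetyUnitsMulHom x₀ (Units.mk0 s hs0)).toContinuousAffineEquiv
  have hTfderiv (x : Euc d) :
      HasFDerivAt T.symm (s⁻¹ • ContinuousLinearMap.id ℝ (Euc d)) x :=
    (((hasFDerivAt_id x).sub_const x₀).const_smul s⁻¹).add_const x₀
  have htest : IsTestFun univ (φ ∘ T.symm) := by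
    exact ⟨hφ.1.comp T.symm.toContinuousAffineMap.contDiff,
      hφ.2.1.comp_homeomorph T.symm.toHomeomorph, subset_univ _⟩
  have hpd (x : Euc d) : pd i (φ ∘ T.symm) (T x) = (s : ℂ)⁻¹ * pd i φ x := by
    simp only [pd, ((hφ.differentiable _).hasFDerivAt.comp (T x) (hTfderiv _)).fderiv]
    simp
  have hzero := (h.hasZeroIntegral i htest).integral_eq_zero
  rw [Measure.restrict_univ] at hzero ⊢
  calc ∫ x, ((s : ℂ)⁻¹ * u (T x) * pd i φ x + u' i (T x) * φ x)
      = ∫ x, (u (T x) * pd i (φ ∘ T.symm) (T x) + u' i (T x) * (φ ∘ T.symm) (T x)) := by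
        simp only [hpd, Function.comp_apply, T.symm_apply_apply, mul_left_comm, mul_assoc]
    _ = 0 := by
        rw [← smul_zero |(s ^ Module.finrank ℝ (Euc d))⁻¹|, ← hzero]
        exact integral_comp_homothety
          (fun x => u x * pd i (φ ∘ T.symm) x + u' i x * (φ ∘ T.symm) x) x₀ s

end HasL2Grad

end WeakGradient

section Density

open scoped Convolution

variable {d : ℕ} {Ω : Set (Euc d)} {u : Euc d → ℂ} {u' : Fin d → Euc d → ℂ}

lemma MemL2.locallyIntegrable {f : Euc d → ℂ} (hf : MemL2 univ f) : LocallyIntegrable f volume :=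
  locallyIntegrableOn_univ.1 hf.locallyIntegrableOn

lemma isTestFun_comp_sub_left {ρ : Euc d → ℝ} (hρ : ContDiff ℝ (⊤ : ℕ∞) ρ)
    (hρc : HasCompactSupport ρ) (x : Euc d) : IsTestFun univ fun y => (ρ (x - y) : ℂ) :=
  isTestFun_ofReal (hρ.comp (contDiff_const.sub contDiff_id))
    (hρc.comp_homeomorph (Homeomorph.subLeft x)) (subset_univ _)

lemma pd_comp_sub_left {ρ : Euc d → ℝ} (hρ : Differentiable ℝ ρ) (x y : Euc d) (i : Fin d) :
    pd i (fun y => (ρ (x - y) : ℂ)) y =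
      -(fderiv ℝ ρ (x - y) (EuclideanSpace.single i (1 : ℝ)) : ℂ) := by
  have hcomp : HasFDerivAt (fun y => ρ (x - y)) _ y :=
    (hρ (x - y)).hasFDerivAt.comp y ((hasFDerivAt_id y).const_sub x)
  rw [pd_ofReal hcomp.differentiableAt, hcomp.fderiv]
  simp

lemma HasL2Grad.pd_convolution (h : HasL2Grad univ univ u u') {ρ : Euc d → ℝ}
    (hρ : ContDiff ℝ (⊤ : ℕ∞) ρ) (hρc : HasCompactSupport ρ) (i : Fin d) (x : Euc d) :
    pd i (ρ ⋆[ContinuousLinearMap.lsmul ℝ ℝ] u) x =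
      (ρ ⋆[ContinuousLinearMap.lsmul ℝ ℝ] u' i) x := by
  have hρ₁ : ContDiff ℝ 1 ρ := hρ.of_le (by norm_cast)
  have htest := isTestFun_comp_sub_left hρ hρc x
  have hweak := h.integral_mul_pd i _ htest
  rw [Measure.restrict_univ] at hweak
  have hflip (w : Euc d → ℂ) : ρ ⋆[ContinuousLinearMap.lsmul ℝ ℝ] w =
      w ⋆[(ContinuousLinearMap.lsmul ℝ ℝ).flip] ρ := (convolution_flip _).symm
  rw [hflip, hflip, pd,
    (hρc.hasFDerivAt_convolution_right _ h.memL2.locallyIntegrable hρ₁ x).fderiv,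
    convolution_precompR_apply _ h.memL2.locallyIntegrable (hρc.fderiv ℝ)
      (hρ₁.continuous_fderiv one_ne_zero)]
  simp only [convolution_def, ContinuousLinearMap.flip_apply, ContinuousLinearMap.lsmul_apply,
    Complex.real_smul]
  simpa only [pd_comp_sub_left (hρ.differentiable (by simp)), mul_neg, integral_neg, neg_inj,
    mul_comm] using hweak

lemma isTestFun_convolution {K : Set (Euc d)} (hK : IsCompact K) {δ : ℝ}
    (hKΩ : Metric.cthickening δ K ⊆ Ω) (hu : LocallyIntegrable u volume)
    (huK : ∀ x ∉ K, u x = 0) (φ : ContDiffBump (0 : Euc d)) (hφ : φ.rOut ≤ δ) :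
    IsTestFun Ω (φ.normed volume ⋆[ContinuousLinearMap.lsmul ℝ ℝ] u) := by
  have hsupp : (φ.normed volume ⋆[ContinuousLinearMap.lsmul ℝ ℝ] u).support ⊆
      Metric.cthickening δ K := by
    refine (support_convolution_subset _).trans ?_
    rintro _ ⟨y, hy, z, hz, rfl⟩
    rw [φ.support_normed_eq, mem_ball_zero_iff] at hy
    refine Metric.mem_cthickening_of_dist_le _ z δ K (of_not_not (mt (huK z) hz)) ?_
    simpa using hy.le.trans hφ
  refine ⟨φ.hasCompactSupport_normed.contDiff_convolution_left _ φ.contDiff_normed hu,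
    HasCompactSupport.of_support_subset_isCompact hK.cthickening hsupp,
    (closure_minimal hsupp Metric.isClosed_cthickening).trans hKΩ⟩

lemma HasL2Grad.exists_isTestFun_approx_of_compact (h : HasL2Grad univ univ u u')
    {K : Set (Euc d)} (hK : IsCompact K) (hΩ : IsOpen Ω) (hKΩ : K ⊆ Ω) (huK : ∀ x ∉ K, u x = 0)
    {e : ℝ≥0∞} (he : e ≠ 0) :
    ∃ φ, IsTestFun Ω φ ∧ eLpNorm (fun x => φ x - u x) 2 volume ≤ e ∧
      ∀ i, eLpNorm (fun x => pd i φ x - u' i x) 2 volume ≤ e := by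
  have hmem {f : Euc d → ℂ} (hf : MemL2 univ f) : MemLp f 2 volume := by
    simpa only [MemL2, Measure.restrict_univ] using hf
  obtain ⟨r, hr, hrΩ⟩ := hK.exists_cthickening_subset_open hΩ hKΩ
  obtain ⟨δ, hδ, happ⟩ := exists_eLpNorm_convolution_normed_sub_le one_le_two
    ENNReal.ofNat_ne_top (hmem h.memL2) he
  choose δ' hδ' happ' using fun i => exists_eLpNorm_convolution_normed_sub_le one_le_two
    ENNReal.ofNat_ne_top (hmem (h.memL2_grad i)) he
  obtain ⟨ρ, ⟨hρr, hρδ, hρδ'⟩, hρ⟩ : ∃ ρ : ℝ, (ρ < r ∧ ρ < δ ∧ ∀ i, ρ < δ' i) ∧ 0 < ρ :=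
    (((eventually_lt_nhds hr).and ((eventually_lt_nhds hδ).and
      (eventually_all.2 fun i => eventually_lt_nhds (hδ' i)))).filter_mono
        nhdsWithin_le_nhds |>.and self_mem_nhdsWithin).exists (f := 𝓝[>] 0)
  let φ : ContDiffBump (0 : Euc d) := ⟨ρ / 2, ρ, half_pos hρ, half_lt_self hρ⟩
  refine ⟨φ.normed volume ⋆[ContinuousLinearMap.lsmul ℝ ℝ] u,
    isTestFun_convolution hK hrΩ h.memL2.locallyIntegrable huK φ hρr.le, happ φ hρδ, fun i => ?_⟩
  simpa only [h.pd_convolution φ.contDiff_normed φ.hasCompactSupport_normed]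
    using happ' i φ (hρδ' i)

end Density

section ConvexDensity

lemma tendsto_eLpNorm_mul_sub {α ι : Type*} [MeasurableSpace α] {μ : Measure α} {p : ℝ≥0∞}
    (hp : 1 ≤ p) {l : Filter ι} {c : ι → ℂ} {f : ι → α → ℂ} {g : α → ℂ}
    (hc : Tendsto c l (𝓝 1)) (hf : ∀ᶠ i in l, MemLp (f i) p μ) (hg : MemLp g p μ)
    (hfg : Tendsto (fun i => eLpNorm (fun x => f i x - g x) p μ) l (𝓝 0)) :
    Tendsto (fun i => eLpNorm (fun x => c i * f i x - g x) p μ) l (𝓝 0) := by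
  have hlim : Tendsto (fun i => ‖c i‖ₑ * eLpNorm (fun x => f i x - g x) p μ +
      ‖c i - 1‖ₑ * eLpNorm g p μ) l (𝓝 0) := by
    have hbound := ENNReal.Tendsto.mul hc.enorm (by simp) hfg (by simp)
    have hconst := ENNReal.Tendsto.mul_const (hc.sub_const 1).enorm (Or.inr hg.eLpNorm_ne_top)
    simpa using hbound.add hconst
  refine tendsto_of_tendsto_of_tendsto_of_le_of_le' tendsto_const_nhds hlim
    (Eventually.of_forall fun _ => zero_le) (hf.mono fun i hfi => ?_)
  calc eLpNorm (fun x => c i * f i x - g x) p μ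
      = eLpNorm (c i • (fun x => f i x - g x) + (c i - 1) • g) p μ := by
        congr 1
        ext x
        simp only [Pi.add_apply, Pi.smul_apply, smul_eq_mul]
        ring
    _ ≤ eLpNorm (c i • fun x => f i x - g x) p μ + eLpNorm ((c i - 1) • g) p μ :=
        eLpNorm_add_le ((hfi.sub hg).const_smul _).1 (hg.const_smul _).1 hp
    _ = _ := by rw [eLpNorm_const_smul, eLpNorm_const_smul]

lemma isCompact_preimage_homothety_closure {E : Type*} [NormedAddCommGroup E] [NormedSpace ℝ E]
    [ProperSpace E] {Ω : Set E} (hΩo : IsOpen Ω) (hΩb : Bornology.IsBounded Ω)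
    (hΩc : Convex ℝ Ω) {x₀ : E} (hx₀ : x₀ ∈ Ω) {s : ℝ} (hs : 1 < s) :
    IsCompact (AffineMap.homothety x₀ s ⁻¹' closure Ω) ∧
      AffineMap.homothety x₀ s ⁻¹' closure Ω ⊆ Ω := by
  have hs0 : s ≠ 0 := (one_pos.trans hs).ne'
  have hsub : AffineMap.homothety x₀ s ⁻¹' closure Ω ⊆ Ω := fun x hx => by
    obtain ⟨y, hy, hyx⟩ := hΩc.closure_subset_image_homothety_interior_of_one_lt
      (hΩo.interior_eq.symm ▸ hx₀) s hs hx
    rw [(AffineEquiv.homothetyUnitsMulHom x₀ (Units.mk0 s hs0)).injective hyx.symm]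
    exact interior_subset hy
  exact ⟨Metric.isCompact_of_isClosed_isBounded
    (isClosed_closure.preimage (AffineMap.homothety_continuous x₀ s)) (hΩb.subset hsub), hsub⟩

variable {d : ℕ} {Ω : Set (Euc d)} {u : Euc d → ℂ} {u' : Fin d → Euc d → ℂ}

lemma HasL2Grad.exists_homothety_approx (h : HasL2Grad univ univ u u') (x₀ : Euc d) {e : ℝ≥0∞}
    (he : e ≠ 0) :
    ∃ s : ℝ, 1 < s ∧
      eLpNorm (fun x => (s : ℂ)⁻¹ * u (AffineMap.homothety x₀ s x) - u x) 2 volume ≤ e ∧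
      ∀ i, eLpNorm (fun x => u' i (AffineMap.homothety x₀ s x) - u' i x) 2 volume ≤ e := by
  have hmem {f : Euc d → ℂ} (hf : MemL2 univ f) : MemLp f 2 volume := by
    simpa only [MemL2, Measure.restrict_univ] using hf
  have hlim {f : Euc d → ℂ} (hf : MemL2 univ f) := tendsto_eLpNorm_comp_homothety_sub x₀
    one_le_two ENNReal.ofNat_ne_top (hmem hf)
  have hinv : Tendsto (fun s : ℝ => (s : ℂ)⁻¹) (𝓝[≥] 1) (𝓝 1) := by
    have h1 : Tendsto (fun s : ℝ => (s : ℂ)) (𝓝 1) (𝓝 1) :=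
      Complex.continuous_ofReal.tendsto' _ _ Complex.ofReal_one
    simpa using (h1.inv₀ one_ne_zero).mono_left nhdsWithin_le_nhds
  have hu := tendsto_eLpNorm_mul_sub one_le_two hinv
    (eventually_nhdsWithin_of_forall fun s hs => memLp_comp_homothety (hmem h.memL2) x₀ hs)
    (hmem h.memL2) (hlim h.memL2)
  have hle {F : ℝ → ℝ≥0∞} (hF : Tendsto F (𝓝[≥] 1) (𝓝 0)) : ∀ᶠ s in 𝓝[>] 1, F s ≤ e :=
    (hF.mono_left (nhdsWithin_mono _ Ioi_subset_Ici_self)).eventually_le_const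
      (pos_iff_ne_zero.2 he)
  have hgt : ∀ᶠ s in 𝓝[>] (1 : ℝ), 1 < s := self_mem_nhdsWithin
  exact (hgt.and ((hle hu).and (eventually_all.2 fun i => hle (hlim (h.memL2_grad i))))).exists

lemma HasL2Grad.exists_isTestFun_approx (hΩo : IsOpen Ω) (hΩb : Bornology.IsBounded Ω)
    (hΩc : Convex ℝ Ω) (h : HasL2Grad Ω univ u u') {e : ℝ≥0∞} (he : e ≠ 0) :
    ∃ φ, IsTestFun Ω φ ∧ eLpNorm (fun x => φ x - u x) 2 (volume.restrict Ω) ≤ e ∧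
      ∀ i, eLpNorm (fun x => pd i φ x - u' i x) 2 (volume.restrict Ω) ≤ e := by
  rcases Ω.eq_empty_or_nonempty with rfl | ⟨x₀, hx₀⟩
  · exact ⟨fun _ => 0, ⟨contDiff_const, HasCompactSupport.zero, by simp⟩, by simp, by simp⟩
  have hext := h.indicator hΩo.measurableSet
  obtain ⟨s, hs, hus, hus'⟩ := hext.exists_homothety_approx x₀ (ENNReal.half_pos he).ne'
  have hdil := hext.comp_homothety x₀ hs.le
  obtain ⟨hK, hKΩ⟩ := isCompact_preimage_homothety_closure hΩo hΩb hΩc hx₀ hs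
  obtain ⟨φ, hφ, hφu, hφu'⟩ := hdil.exists_isTestFun_approx_of_compact hK hΩo hKΩ
    (fun x hx => by rw [indicator_of_notMem fun hx' => hx (subset_closure hx'), mul_zero])
    (ENNReal.half_pos he).ne'
  have hcombine {f g w : Euc d → ℂ} (hf : MemL2 univ f) (hg : MemL2 univ g)
      (hw : MemL2 univ (Ω.indicator w)) (hfg : eLpNorm (fun x => f x - g x) 2 volume ≤ e / 2)
      (hgw : eLpNorm (fun x => g x - Ω.indicator w x) 2 volume ≤ e / 2) :
      eLpNorm (fun x => f x - w x) 2 (volume.restrict Ω) ≤ e := by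
    simp only [MemL2, Measure.restrict_univ] at hf hg hw
    calc eLpNorm (fun x => f x - w x) 2 (volume.restrict Ω)
        = eLpNorm (fun x => (f x - g x) + (g x - Ω.indicator w x)) 2 (volume.restrict Ω) :=
          eLpNorm_congr_ae <| by
            filter_upwards [ae_restrict_mem hΩo.measurableSet] with x hx
            simp [hx]
      _ ≤ eLpNorm (fun x => (f x - g x) + (g x - Ω.indicator w x)) 2 volume :=
          eLpNorm_mono_measure _ Measure.restrict_le_self
      _ ≤ e / 2 + e / 2 :=
          (eLpNorm_add_le (hf.sub hg).1 (hg.sub hw).1 one_le_two).trans (add_le_add hfg hgw)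
      _ = e := ENNReal.add_halves e
  exact ⟨φ, hφ, hcombine hφ.memL2 hdil.memL2 hext.memL2 hφu hus, fun i =>
    hcombine (hφ.pd i).memL2 (hdil.memL2_grad i) (hext.memL2_grad i) (hφu' i) (hus' i)⟩

lemma HasL2Grad.exists_seq_isTestFun_tendsto (hΩo : IsOpen Ω) (hΩb : Bornology.IsBounded Ω)
    (hΩc : Convex ℝ Ω) (h : HasL2Grad Ω univ u u') :
    ∃ φ : ℕ → Euc d → ℂ, (∀ n, IsTestFun Ω (φ n)) ∧
      Tendsto (fun n => eLpNorm (fun x => φ n x - u x) 2 (volume.restrict Ω)) atTop (𝓝 0) ∧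
      ∀ i, Tendsto (fun n => eLpNorm (fun x => pd i (φ n) x - u' i x) 2 (volume.restrict Ω))
        atTop (𝓝 0) := by
  choose φ hφ hφu hφu' using fun n : ℕ =>
    h.exists_isTestFun_approx hΩo hΩb hΩc (ENNReal.inv_ne_zero.2 (ENNReal.natCast_ne_top n))
  have hlim {F : ℕ → ℝ≥0∞} (hF : ∀ n, F n ≤ (n : ℝ≥0∞)⁻¹) : Tendsto F atTop (𝓝 0) :=
    tendsto_of_tendsto_of_tendsto_of_le_of_le tendsto_const_nhds
      ENNReal.tendsto_inv_nat_nhds_zero (fun _ => zero_le) hF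
  exact ⟨φ, hφ, hlim hφu, fun i => hlim fun n => hφu' n i⟩

lemma HasL2Grad.hasZeroIntegral_mul (hΩo : IsOpen Ω) (hΩb : Bornology.IsBounded Ω)
    (hΩc : Convex ℝ Ω) (h : HasL2Grad Ω univ u u') {a a' : Euc d → ℂ} {i : Fin d}
    (ha : MemL2 Ω a) (ha' : MemL2 Ω a') (haa' : IsWeakDeriv Ω i a a') :
    HasZeroIntegral (volume.restrict Ω) fun x => a x * u' i x + a' x * u x := by
  obtain ⟨φ, hφ, hφu, hφu'⟩ := h.exists_seq_isTestFun_tendsto hΩo hΩb hΩc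
  have hlim := (ha.tendsto_integral_mul (h.memL2_grad i) (fun n => ((hφ n).pd i).memL2)
    (hφu' i)).add (ha'.tendsto_integral_mul h.memL2 (fun n => (hφ n).memL2) hφu)
  have hint := ha.integrable_mul (h.memL2_grad i)
  have hint' := ha'.integrable_mul h.memL2
  refine ⟨hint.add hint', ?_⟩
  rw [integral_add hint hint']
  exact tendsto_nhds_unique hlim
    (tendsto_const_nhds.congr fun n => by rw [haa' _ (hφ n), neg_add_cancel])

lemma HasL2Grad.hasZeroIntegral_curl (hΩo : IsOpen Ω) (hΩb : Bornology.IsBounded Ω)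
    (hΩc : Convex ℝ Ω) (h : HasL2Grad Ω univ u u') {a : Euc d → ℂ} {a' : Fin d → Euc d → ℂ}
    (ha : HasL2Grad Ω Ω a a') (i j : Fin d) :
    HasZeroIntegral (volume.restrict Ω) fun x => a' i x * u' j x - a' j x * u' i x := by
  obtain ⟨φ, hφ, -, hφu'⟩ := h.exists_seq_isTestFun_tendsto hΩo hΩb hΩc
  have hlim (i j : Fin d) := (ha.memL2_grad i).tendsto_integral_mul (h.memL2_grad j)
    (fun n => ((hφ n).pd j).memL2) (hφu' j)
  have hint (i j : Fin d) := (ha.memL2_grad i).integrable_mul (h.memL2_grad j)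
  refine ⟨(hint i j).sub (hint j i), ?_⟩
  rw [integral_sub (hint i j) (hint j i), sub_eq_zero]
  refine tendsto_nhds_unique (hlim i j) ((hlim j i).congr fun n => neg_injective ?_)
  rw [← ha.isWeakDeriv j _ ((hφ n).pd i), ← ha.isWeakDeriv i _ ((hφ n).pd j)]
  simp only [pd_comm (hφ n).1 i j]

end ConvexDensity

section Poincare

variable {d : ℕ} {Ω : Set (Euc d)} {u φ : Euc d → ℂ} {u' : Fin d → Euc d → ℂ}

lemma MemL2.sq_L2N (hu : MemL2 Ω u) : L2N Ω u ^ 2 = ∫ x in Ω, ‖u x‖ ^ 2 := by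
  rw [L2N, toReal_eLpNorm hu.1, lpNorm_eq_integral_norm_rpow_toReal two_ne_zero
    ENNReal.ofNat_ne_top hu.1, ENNReal.toReal_ofNat, ← Real.rpow_mul_natCast
    (integral_nonneg fun x => by positivity)]
  norm_num

lemma sq_norm_le_sum_sq_norm_apply_single {F : Type*} [NormedAddCommGroup F] [NormedSpace ℝ F]
    (T : Euc d →L[ℝ] F) : ‖T‖ ^ 2 ≤ ∑ i, ‖T (EuclideanSpace.single i (1 : ℝ))‖ ^ 2 := by
  rw [← Real.le_sqrt (norm_nonneg _) (by positivity)]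
  refine T.opNorm_le_bound (Real.sqrt_nonneg _) fun v => ?_
  calc ‖T v‖ = ‖∑ i, v i • T (EuclideanSpace.single i (1 : ℝ))‖ := by
        conv_lhs => rw [← (EuclideanSpace.basisFun (Fin d) ℝ).sum_repr v]
        simp
    _ ≤ ∑ i, ‖T (EuclideanSpace.single i (1 : ℝ))‖ * ‖v i‖ :=
        norm_sum_le_of_le _ fun i _ => by rw [norm_smul, mul_comm]
    _ ≤ _ := by
        rw [EuclideanSpace.norm_eq]
        exact Real.sum_mul_le_sqrt_mul_sqrt _ _ _

lemma IsTestFun.sq_L2N (hφ : IsTestFun Ω φ) : L2N Ω φ ^ 2 = ∫ x, ‖φ x‖ ^ 2 := by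
  rw [hφ.memL2.sq_L2N]
  exact setIntegral_eq_integral_of_forall_compl_eq_zero fun x hx => by
    simp [hφ.eq_zero_of_notMem hx]

lemma integral_sq_norm_fderiv_le_sum_sq_L2N_pd (hφ : IsTestFun Ω φ) :
    ∫ x, ‖fderiv ℝ φ x‖ ^ 2 ≤ ∑ i, L2N Ω (pd i φ) ^ 2 := by
  have hcont (i : Fin d) : Continuous fun x => ‖pd i φ x‖ ^ 2 := (hφ.pd i).1.continuous.norm.pow 2
  have hint (i : Fin d) : Integrable (fun x => ‖pd i φ x‖ ^ 2) volume :=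
    (hcont i).integrable_of_hasCompactSupport <|
      (hφ.pd i).2.1.comp_left (g := fun z : ℂ => ‖z‖ ^ 2) (by simp)
  rw [Finset.sum_congr rfl fun i _ => (hφ.pd i).sq_L2N, ← integral_finsetSum _ fun i _ => hint i]
  exact integral_mono_of_nonneg (Eventually.of_forall fun x => by positivity)
    (integrable_finsetSum _ fun i _ => hint i)
    (Eventually.of_forall fun x => sq_norm_le_sum_sq_norm_apply_single _)

lemma lambda1_mul_sq_L2N_le_sum_sq_L2N_pd (hφ : IsTestFun Ω φ) :
    lambda1 Ω * L2N Ω φ ^ 2 ≤ ∑ i, L2N Ω (pd i φ) ^ 2 := by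
  refine le_trans ?_ (integral_sq_norm_fderiv_le_sum_sq_L2N_pd hφ)
  rw [hφ.sq_L2N]
  have hnonneg : 0 ≤ ∫ x, ‖φ x‖ ^ 2 := by positivity
  rcases hnonneg.eq_or_lt' with hzero | hpos
  · rw [hzero, mul_zero]
    positivity
  rw [← le_div_iff₀ hpos]
  refine csInf_le ⟨0, ?_⟩ ⟨φ, hφ, ?_, rfl⟩
  · rintro r ⟨ψ, -, -, rfl⟩
    positivity
  · rintro rfl
    simp at hpos

lemma HasL2Grad.lambda1_mul_sq_L2N_le (hΩo : IsOpen Ω) (hΩb : Bornology.IsBounded Ω)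
    (hΩc : Convex ℝ Ω) (h : HasL2Grad Ω univ u u') :
    lambda1 Ω * L2N Ω u ^ 2 ≤ ∑ i, L2N Ω (u' i) ^ 2 := by
  obtain ⟨φ, hφ, hφu, hφu'⟩ := h.exists_seq_isTestFun_tendsto hΩo hΩb hΩc
  exact le_of_tendsto_of_tendsto'
    (((h.memL2.tendsto_L2N (fun n => (hφ n).memL2) hφu).pow 2).const_mul _)
    (tendsto_finsetSum _ fun i _ =>
      ((h.memL2_grad i).tendsto_L2N (fun n => ((hφ n).pd i).memL2) (hφu' i)).pow 2)
    fun n => lambda1_mul_sq_L2N_le_sum_sq_L2N_pd (hφ n)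

end Poincare

section WeakDerivUniqueness

variable {d : ℕ} {Ω Ω' : Set (Euc d)} {i : Fin d} {u v w : Euc d → ℂ} {u' : Fin d → Euc d → ℂ}

lemma IsWeakDeriv.mono (h : IsWeakDeriv Ω' i u v) (hΩ : Ω ⊆ Ω') : IsWeakDeriv Ω i u v := by
  intro φ hφ
  have hφ' := hφ.mono hΩ
  rw [(hφ.pd i).setIntegral_mul, hφ.setIntegral_mul, ← (hφ'.pd i).setIntegral_mul,
    ← hφ'.setIntegral_mul, h φ hφ']

lemma IsWeakDeriv.congr_left (h : IsWeakDeriv Ω i u v) (hΩ : MeasurableSet Ω) (huw : EqOn u w Ω) :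
    IsWeakDeriv Ω i w v := by
  intro φ hφ
  rw [← h φ hφ]
  exact setIntegral_congr_fun hΩ fun x hx => by simp only [huw hx]

lemma IsWeakDeriv.ae_eq (hΩ : IsOpen Ω) (hv : MemL2 Ω v) (hw : MemL2 Ω w)
    (h : IsWeakDeriv Ω i u v) (h' : IsWeakDeriv Ω i u w) : v =ᵐ[volume.restrict Ω] w := by
  refine (ae_restrict_eq_zero_of_integral_mul_isTestFun hΩ
    (MemL2.locallyIntegrableOn (MemLp.sub hv hw)) fun φ hφ => ?_).mono fun x => sub_eq_zero.1
  simp only [Pi.sub_apply, sub_mul]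
  rw [integral_sub (hv.integrable_mul hφ.memL2) (hw.integrable_mul hφ.memL2), sub_eq_zero]
  exact neg_injective ((h φ hφ).symm.trans (h' φ hφ))

lemma HasL2Grad.ae_symm {b : Fin d → Fin d → Euc d → ℂ} (hΩ : IsOpen Ω)
    (h : HasL2Grad Ω Ω u u') (hb : ∀ j, HasL2Grad Ω Ω (u' j) fun i => b i j) (i j : Fin d) :
    b i j =ᵐ[volume.restrict Ω] b j i := by
  refine (ae_restrict_eq_zero_of_integral_mul_isTestFun hΩ (MemL2.locallyIntegrableOn
    (MemLp.sub ((hb j).memL2_grad i) ((hb i).memL2_grad j))) fun φ hφ => ?_).mono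
    fun x => sub_eq_zero.1
  refine (((((hb j).hasZeroIntegral i hφ).sub ((hb i).hasZeroIntegral j hφ)).sub
    ((h.hasZeroIntegral j (hφ.pd i)).sub (h.hasZeroIntegral i (hφ.pd j)))).congr
    (Eventually.of_forall fun x => ?_)).integral_eq_zero
  simp only [pd_comm hφ.1 j i, Pi.sub_apply]
  ring

lemma HasL2Grad.of_memH10 (hΩo : IsOpen Ω) (hΩc : Convex ℝ Ω) (h : HasL2Grad Ω Ω u u')
    (h₀ : MemH10 Ω u) : HasL2Grad Ω univ u u' := by
  refine ⟨h.memL2, h.memL2_grad, fun i φ hφ => ?_⟩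
  obtain ⟨v, hv, huv⟩ := h₀.2 i
  have hmem (s : Set (Euc d)) : MemL2 s v :=
    hv.mono_measure (Measure.restrict_mono_set _ s.subset_univ)
  have hinside : v =ᵐ[volume.restrict Ω] u' i :=
    IsWeakDeriv.ae_eq hΩo (hmem Ω) (h.memL2_grad i)
      ((huv.mono (subset_univ Ω)).congr_left hΩo.measurableSet eqOn_indicator) (h.isWeakDeriv i)
  have houtside : v =ᵐ[volume.restrict (closure Ω)ᶜ] 0 := by
    refine IsWeakDeriv.ae_eq isClosed_closure.isOpen_compl (u := 0) (hmem _) MemLp.zero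
      ((huv.mono (subset_univ _)).congr_left isClosed_closure.measurableSet.compl
        fun x hx => indicator_of_notMem (fun hxΩ => hx (subset_closure hxΩ)) u) fun ψ _ => ?_
    simp
  have hv_eq : v =ᵐ[volume] Ω.indicator (u' i) := by
    filter_upwards [(ae_restrict_iff' hΩo.measurableSet).1 hinside,
      (ae_restrict_iff' isClosed_closure.measurableSet.compl).1 houtside,
      measure_eq_zero_iff_ae_notMem.1 (hΩc.addHaar_frontier volume)] with x hxin hxout hx
    by_cases hxΩ : x ∈ Ω
    · rw [hxin hxΩ, indicator_of_mem hxΩ]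
    · rw [indicator_of_notMem hxΩ]
      exact hxout fun hcl => hx ⟨hcl, fun hint => hxΩ (interior_subset hint)⟩
  have hvφ : (fun x => v x * φ x) =ᵐ[volume] fun x => Ω.indicator (u' i) x * φ x :=
    hv_eq.mono fun x hx => by simp only [hx]
  have hweak := huv φ hφ
  rw [Measure.restrict_univ, integral_congr_ae hvφ] at hweak
  simpa only [← indicator_mul_left, integral_indicator hΩo.measurableSet] using hweak

end WeakDerivUniqueness

section SmoothRamp

/-- A smooth, convex, nondecreasing regularization of the positive part `t ↦ max t 0`, used to
flatten functions where they are nonpositive. -/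
def smoothRamp (t : ℝ) : ℝ := ∫ s in 0..t, Real.smoothTransition s

lemma intervalIntegrable_smoothTransition (a b : ℝ) :
    IntervalIntegrable Real.smoothTransition volume a b :=
  Real.smoothTransition.continuous.intervalIntegrable a b

lemma hasDerivAt_smoothRamp (t : ℝ) : HasDerivAt smoothRamp (Real.smoothTransition t) t :=
  Real.smoothTransition.continuous.integral_hasStrictDerivAt 0 t |>.hasDerivAt

lemma deriv_smoothRamp : deriv smoothRamp = Real.smoothTransition :=
  funext fun t => (hasDerivAt_smoothRamp t).deriv

lemma differentiable_smoothRamp : Differentiable ℝ smoothRamp := fun t =>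
  (hasDerivAt_smoothRamp t).differentiableAt

lemma contDiff_smoothRamp : ContDiff ℝ (⊤ : ℕ∞) smoothRamp :=
  contDiff_infty_iff_deriv.2
    ⟨differentiable_smoothRamp, deriv_smoothRamp ▸ Real.smoothTransition.contDiff⟩

lemma monotone_smoothRamp : Monotone smoothRamp :=
  monotone_of_deriv_nonneg differentiable_smoothRamp fun t =>
    deriv_smoothRamp ▸ Real.smoothTransition.nonneg t

lemma convexOn_smoothRamp : ConvexOn ℝ univ smoothRamp :=
  Monotone.convexOn_univ_of_deriv differentiable_smoothRamp
    (deriv_smoothRamp ▸ Real.smoothTransition.monotone)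

lemma smoothRamp_of_nonpos {t : ℝ} (ht : t ≤ 0) : smoothRamp t = 0 := by
  have hzero : EqOn Real.smoothTransition 0 (uIcc 0 t) := fun s hs =>
    Real.smoothTransition.zero_of_nonpos (uIcc_of_ge ht ▸ hs).2
  simp [smoothRamp, intervalIntegral.integral_congr hzero]

lemma smoothRamp_nonneg (t : ℝ) : 0 ≤ smoothRamp t :=
  (le_total t 0).elim (fun ht => (smoothRamp_of_nonpos ht).ge) fun ht =>
    smoothRamp_of_nonpos le_rfl ▸ monotone_smoothRamp ht

lemma smoothRamp_le_self {t : ℝ} (ht : 0 ≤ t) : smoothRamp t ≤ t := by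
  simpa [smoothRamp] using intervalIntegral.integral_mono ht
    (intervalIntegrable_smoothTransition 0 t) (g := fun _ => 1) intervalIntegrable_const
    Real.smoothTransition.le_one

lemma sub_one_le_smoothRamp (t : ℝ) : t - 1 ≤ smoothRamp t := by
  rcases le_total t 1 with ht | ht
  · exact (sub_nonpos.2 ht).trans (smoothRamp_nonneg t)
  have hone : EqOn 1 Real.smoothTransition (uIcc 1 t) := fun s hs =>
    (Real.smoothTransition.one_of_one_le (uIcc_of_le ht ▸ hs).1).symm
  calc t - 1 = ∫ s in 1..t, (1 : ℝ → ℝ) s := by simp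
    _ = ∫ s in 1..t, Real.smoothTransition s := intervalIntegral.integral_congr hone
    _ ≤ smoothRamp 1 + ∫ s in 1..t, Real.smoothTransition s :=
        le_add_of_nonneg_left (smoothRamp_nonneg 1)
    _ = smoothRamp t := intervalIntegral.integral_add_adjacent_intervals
        (intervalIntegrable_smoothTransition 0 1) (intervalIntegrable_smoothTransition 1 t)

/-- Smooth cut-offs of the identity: `rampCutoff n` vanishes below `(n + 1)⁻¹` and tends to the
identity on `[0, ∞)`, while its slope stays in `[0, 1]`. -/
def rampCutoff (n : ℕ) (s : ℝ) : ℝ := smoothRamp ((n + 1) * s - 1) / (n + 1)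

lemma hasDerivAt_rampCutoff (n : ℕ) (s : ℝ) :
    HasDerivAt (rampCutoff n) (Real.smoothTransition ((n + 1) * s - 1)) s := by
  have hlin : HasDerivAt (fun s : ℝ => (n + 1) * s - 1) (n + 1) s := by
    simpa using ((hasDerivAt_id s).const_mul (n + 1 : ℝ)).sub_const 1
  have hcomp := ((hasDerivAt_smoothRamp _).comp s hlin).div_const (n + 1 : ℝ)
  rwa [mul_div_assoc, div_self (Nat.cast_add_one_ne_zero n), mul_one] at hcomp

lemma contDiff_rampCutoff (n : ℕ) : ContDiff ℝ (⊤ : ℕ∞) (rampCutoff n) :=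
  (contDiff_smoothRamp.comp ((contDiff_const.mul contDiff_id).sub contDiff_const)).div_const _

lemma rampCutoff_of_mul_le_one {n : ℕ} {s : ℝ} (hs : (n + 1) * s ≤ 1) : rampCutoff n s = 0 := by
  rw [rampCutoff, smoothRamp_of_nonpos (sub_nonpos.2 hs), zero_div]

lemma rampCutoff_nonneg (n : ℕ) (s : ℝ) : 0 ≤ rampCutoff n s :=
  div_nonneg (smoothRamp_nonneg _) n.cast_add_one_pos.le

lemma rampCutoff_le_self (n : ℕ) {s : ℝ} (hs : 0 ≤ s) : rampCutoff n s ≤ s := by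
  have hn : (0 : ℝ) < n + 1 := n.cast_add_one_pos
  rw [rampCutoff, div_le_iff₀' hn]
  exact (monotone_smoothRamp (sub_le_self _ zero_le_one)).trans
    (smoothRamp_le_self (mul_nonneg hn.le hs))

lemma tendsto_rampCutoff {s : ℝ} (hs : 0 ≤ s) :
    Tendsto (fun n => rampCutoff n s) atTop (𝓝 s) := by
  have hlower : Tendsto (fun n : ℕ => s - 2 * (1 / ((n : ℝ) + 1))) atTop (𝓝 s) := by
    simpa using (tendsto_one_div_add_atTop_nhds_zero_nat.const_mul (2 : ℝ)).const_sub s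
  refine tendsto_of_tendsto_of_tendsto_of_le_of_le hlower tendsto_const_nhds (fun n => ?_)
    fun n => rampCutoff_le_self n hs
  have hn : (0 : ℝ) < n + 1 := n.cast_add_one_pos
  rw [rampCutoff, le_div_iff₀ hn, sub_mul, mul_assoc, one_div_mul_cancel hn.ne']
  linarith [sub_one_le_smoothRamp ((n + 1) * s - 1)]

lemma tendsto_smoothTransition_mul_sub_one {s : ℝ} (hs : 0 < s) :
    Tendsto (fun n : ℕ => Real.smoothTransition ((n + 1) * s - 1)) atTop (𝓝 1) := by
  have hlarge : Tendsto (fun n : ℕ => ((n : ℝ) + 1) * s - 1) atTop atTop :=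
    tendsto_atTop_add_const_right _ _
      ((tendsto_atTop_add_const_right _ _ tendsto_natCast_atTop_atTop).atTop_mul_const hs)
  exact tendsto_const_nhds.congr' <| (hlarge.eventually_ge_atTop 1).mono fun n hn =>
    (Real.smoothTransition.one_of_one_le hn).symm

end SmoothRamp

section DefiningFunction

variable {d : ℕ} {Ω : Set (Euc d)} {η : Euc d → ℝ} {φ : Euc d → ℂ}

lemma isTestFun_rampCutoff_mul (hη : ContDiff ℝ (⊤ : ℕ∞) η) (hηΩ : Ω = {x | 0 < η x})
    (hφ : IsTestFun univ φ) (n : ℕ) : IsTestFun Ω fun x => (rampCutoff n (η x) : ℂ) * φ x := by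
  have hn : (0 : ℝ) < n + 1 := n.cast_add_one_pos
  refine ⟨(Complex.ofRealCLM.contDiff.comp ((contDiff_rampCutoff n).comp hη)).mul hφ.1,
    hφ.2.1.mul_left, ?_⟩
  calc tsupport (fun x => (rampCutoff n (η x) : ℂ) * φ x) ⊆ {x | 1 ≤ (n + 1) * η x} :=
        closure_minimal (fun x hx => (le_of_not_ge fun hle => hx (by
          simp [rampCutoff_of_mul_le_one hle]) : 1 ≤ (n + 1) * η x))
          (isClosed_le continuous_const (continuous_const.mul hη.continuous))
    _ ⊆ {x | 0 < η x} := fun x hx => pos_of_mul_pos_right (one_pos.trans_le hx) hn.le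
    _ = Ω := hηΩ.symm

lemma pd_rampCutoff_comp (hη : Differentiable ℝ η) (n : ℕ) (i : Fin d) (x : Euc d) :
    pd i (fun y => (rampCutoff n (η y) : ℂ)) x =
      Real.smoothTransition ((n + 1) * η x - 1) * pd i (fun y => (η y : ℂ)) x := by
  have hcomp : HasFDerivAt (fun y => rampCutoff n (η y)) _ x :=
    (hasDerivAt_rampCutoff n (η x)).comp_hasFDerivAt x (hη x).hasFDerivAt
  rw [pd_ofReal hcomp.differentiableAt, pd_ofReal (hη x), hcomp.fderiv]
  simp

lemma norm_ofReal_mul_add_ofReal_mul_le {s r t : ℝ} (hs₀ : 0 ≤ s) (hs₁ : s ≤ 1) (hr₀ : 0 ≤ r)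
    (hrt : r ≤ t) (z w : ℂ) : ‖(s : ℂ) * z + r * w‖ ≤ ‖z‖ + ‖(t : ℂ) * w‖ := by
  refine (norm_add_le _ _).trans (add_le_add ?_ ?_)
  · rw [norm_mul, Complex.norm_of_nonneg hs₀]
    exact mul_le_of_le_one_left (norm_nonneg z) hs₁
  · rw [norm_mul, norm_mul, Complex.norm_of_nonneg hr₀, Complex.norm_of_nonneg (hr₀.trans hrt)]
    gcongr

lemma tendsto_integral_smoothTransition_mul_add_rampCutoff_mul {α : Type*} [MeasurableSpace α]
    {μ : Measure α} {η : α → ℝ} {P Q : α → ℂ} (hpos : ∀ᵐ x ∂μ, 0 < η x) (hP : Integrable P μ)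
    (hQ : Integrable (fun x => (η x : ℂ) * Q x) μ)
    (hmeas : ∀ n : ℕ, AEStronglyMeasurable (fun x =>
      (Real.smoothTransition ((n + 1) * η x - 1) : ℂ) * P x + rampCutoff n (η x) * Q x) μ) :
    Tendsto (fun n : ℕ => ∫ x, (Real.smoothTransition ((n + 1) * η x - 1) : ℂ) * P x
      + rampCutoff n (η x) * Q x ∂μ) atTop (𝓝 (∫ x, P x + η x * Q x ∂μ)) := by
  refine tendsto_integral_of_dominated_convergence _ hmeas (hP.norm.add hQ.norm)
    (fun n => hpos.mono fun x hx => ?_) (hpos.mono fun x hx => ?_)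
  · exact norm_ofReal_mul_add_ofReal_mul_le (Real.smoothTransition.nonneg _)
      (Real.smoothTransition.le_one _) (rampCutoff_nonneg n _) (rampCutoff_le_self n hx.le) _ _
  · simpa using ((tendsto_smoothTransition_mul_sub_one hx).ofReal.mul_const (P x)).add
      ((tendsto_rampCutoff hx.le).ofReal.mul_const (Q x))

lemma setIntegral_pd_eq_zero (hφ : IsTestFun Ω φ) (i : Fin d) : ∫ x in Ω, pd i φ x = 0 := by
  have hint : Integrable (pd i φ) volume :=
    (hφ.pd i).1.continuous.integrable_of_hasCompactSupport (hφ.pd i).2.1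
  have hint' : Integrable φ volume := hφ.1.continuous.integrable_of_hasCompactSupport hφ.2.1
  simpa using ((hφ.pd i).setIntegral_mul 1).trans
    (integral_mul_fderiv_eq_neg_fderiv_mul_of_integrable (f := 1) (by simp)
      (by simp only [Pi.one_apply, one_mul]; exact hint) (by simpa using hint')
      (fun _ _ => differentiableAt_const 1) fun _ _ => hφ.differentiable _)

lemma hasL2Grad_univ_of_eq_setOf_pos (hΩ : Bornology.IsBounded Ω) (hη : ContDiff ℝ (⊤ : ℕ∞) η)
    (hηΩ : Ω = {x | 0 < η x}) :
    HasL2Grad Ω univ (fun x => (η x : ℂ)) fun i => pd i fun x => (η x : ℂ) := by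
  have hηC : ContDiff ℝ (⊤ : ℕ∞) fun x => (η x : ℂ) := Complex.ofRealCLM.contDiff.comp hη
  have : IsFiniteMeasure (volume.restrict Ω) :=
    isFiniteMeasure_restrict.2 hΩ.measure_lt_top.ne
  have hmem {g : Euc d → ℂ} (hg : Continuous g) : MemL2 Ω g :=
    (memLp_top_restrict_of_continuous hΩ hg).mono_exponent le_top
  refine .of_integral_eq_zero (hmem hηC.continuous) (fun i => hmem (contDiff_pd hηC i).continuous)
    fun i φ hφ => ?_
  have htest := isTestFun_rampCutoff_mul hη hηΩ hφ
  have hpd (n : ℕ) (x : Euc d) : pd i (fun y => (rampCutoff n (η y) : ℂ) * φ y) x =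
      (Real.smoothTransition ((n + 1) * η x - 1) : ℂ) * (pd i (fun y => (η y : ℂ)) x * φ x)
        + rampCutoff n (η x) * pd i φ x := by
    have hcut : ContDiff ℝ (⊤ : ℕ∞) fun y => (rampCutoff n (η y) : ℂ) :=
      Complex.ofRealCLM.contDiff.comp ((contDiff_rampCutoff n).comp hη)
    rw [pd_mul (hcut.differentiable (by simp) x) (hφ.differentiable x),
      pd_rampCutoff_comp (hη.differentiable (by simp)), mul_assoc]
  have hpos : ∀ᵐ x ∂volume.restrict Ω, 0 < η x := by
    rw [hηΩ]
    exact ae_restrict_mem (measurableSet_lt measurable_const hη.continuous.measurable)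
  have hlim := tendsto_integral_smoothTransition_mul_add_rampCutoff_mul hpos
    ((hmem (contDiff_pd hηC i).continuous).integrable_mul hφ.memL2)
    ((hmem hηC.continuous).integrable_mul (hφ.pd i).memL2)
    fun n => funext (hpd n) ▸ ((htest n).pd i).1.continuous.aestronglyMeasurable
  simp only [← hpd, setIntegral_pd_eq_zero (htest _)] at hlim
  rw [tendsto_nhds_unique tendsto_const_nhds hlim]
  simp only [add_comm]

end DefiningFunction

section ConvexDefiningFunction

variable {E : Type*} [NormedAddCommGroup E] [NormedSpace ℝ E] {S : Set E} {f : E → ℝ}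

lemma fderiv_sub_nonpos_of_mem_frontier (hf : Differentiable ℝ f) (hS : S = {x | f x < 0})
    (hSc : Convex ℝ S) {z w : E} (hz : z ∈ frontier S) (hw : w ∈ S) :
    fderiv ℝ f z (w - z) ≤ 0 := by
  have hSo : IsOpen S := hS ▸ isOpen_lt hf.continuous continuous_const
  have hfz : f z = 0 := frontier_lt_subset_eq hf.continuous continuous_const (hS ▸ hz)
  have hder : HasDerivAt (fun t : ℝ => f (AffineMap.lineMap z w t)) (fderiv ℝ f z (w - z)) 0 :=
    HasFDerivAt.comp_hasDerivAt 0 (by simpa using (hf z).hasFDerivAt) AffineMap.hasDerivAt_lineMap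
  refine le_of_tendsto hder.tendsto_slope_zero_right ?_
  filter_upwards [Ioo_mem_nhdsGT one_pos] with t ht
  have hmem : AffineMap.lineMap z w t ∈ S := by
    rw [AffineMap.lineMap_apply_module]
    simpa only [hSo.interior_eq] using hSc.combo_closure_interior_mem_interior hz.1
      (hSo.interior_eq.symm ▸ hw) (sub_nonneg.2 ht.2.le) ht.1 (by ring)
  have hneg : f (AffineMap.lineMap z w t) < 0 := by
    rw [hS] at hmem
    exact hmem
  simpa [hfz] using mul_nonpos_of_nonneg_of_nonpos (inv_nonneg.2 ht.1.le) hneg.le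

lemma fderiv_apply_self_ne_zero_of_mem_frontier (hf : Differentiable ℝ f)
    (hS : S = {x | f x < 0}) (hSc : Convex ℝ S) (h0 : (0 : E) ∈ S) {z : E}
    (hz : z ∈ frontier S) (hfz : fderiv ℝ f z ≠ 0) : fderiv ℝ f z z ≠ 0 := by
  intro hzz
  have hSo : IsOpen S := hS ▸ isOpen_lt hf.continuous continuous_const
  have hmax : IsLocalMax (fderiv ℝ f z) 0 := by
    filter_upwards [hSo.mem_nhds h0] with w hw
    simpa [map_sub, hzz] using fderiv_sub_nonpos_of_mem_frontier hf hS hSc hz hw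
  exact hfz ((ContinuousLinearMap.fderiv _).symm.trans hmax.fderiv_eq_zero)

lemma contDiffAt_of_eventually_apply_eq [CompleteSpace E] {n : WithTop ℕ∞} {Φ : E × ℝ → ℝ}
    {g : E → ℝ} {y : E} (hn : n ≠ 0) (hΦ : ContDiffAt ℝ n Φ (y, g y)) (hg : ContinuousAt g y)
    (hΦg : ∀ᶠ x in 𝓝 y, Φ (x, g x) = Φ (y, g y)) (hne : fderiv ℝ Φ (y, g y) (0, 1) ≠ 0) :
    ContDiffAt ℝ n g y := by
  have hinv : (fderiv ℝ Φ (y, g y) ∘L .inr ℝ E ℝ).IsInvertible := by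
    refine ⟨ContinuousLinearEquiv.unitsEquivAut ℝ (Units.mk0 _ hne), ?_⟩
    ext
    simp
  refine (hΦ.contDiffAt_implicitFunction hn hinv).congr_of_eventuallyEq ?_
  filter_upwards [hΦg, (continuousAt_id.prodMk hg).eventually
    (hΦ.eventually_apply_eq_iff_implicitFunction hn hinv)] with x hx hiff
  exact (hiff.1 hx).symm

lemma fderiv_comp_snd_smul_fst (hf : Differentiable ℝ f) (x : E) (t : ℝ) :
    fderiv ℝ (fun p : E × ℝ => f (p.2 • p.1)) (x, t) (0, 1) = fderiv ℝ f (t • x) x := by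
  have hcomp : HasFDerivAt (fun p : E × ℝ => f (p.2 • p.1)) _ (x, t) :=
    (hf (t • x)).hasFDerivAt.comp (x, t)
      ((hasFDerivAt_snd (𝕜 := ℝ) (p := (x, t))).smul (hasFDerivAt_fst (𝕜 := ℝ) (p := (x, t))))
  rw [hcomp.fderiv]
  simp

lemma inv_gauge_smul_mem_frontier (hSc : Convex ℝ S) (hS0 : S ∈ 𝓝 0)
    (hSb : Bornology.IsBounded S) {x : E} (hx : x ≠ 0) : (gauge S x)⁻¹ • x ∈ frontier S := by
  have hpos : 0 < gauge S x :=
    (gauge_pos (absorbent_nhds_zero hS0) (NormedSpace.isVonNBounded_of_isBounded ℝ hSb)).2 hx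
  rw [← gauge_eq_one_iff_mem_frontier hSc hS0, gauge_smul_of_nonneg (inv_nonneg.2 hpos.le),
    smul_eq_mul, inv_mul_cancel₀ hpos.ne']

lemma contDiffAt_gauge [CompleteSpace E] (hf : ContDiff ℝ (⊤ : ℕ∞) f) (hS : S = {x | f x < 0})
    (hSc : Convex ℝ S) (hSb : Bornology.IsBounded S) (h0 : (0 : E) ∈ S)
    (hdf : ∀ x ∈ frontier S, fderiv ℝ f x ≠ 0) {y : E} (hy : y ≠ 0) :
    ContDiffAt ℝ (⊤ : ℕ∞) (gauge S) y := by
  have hdiff : Differentiable ℝ f := hf.differentiable (by simp)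
  have hS0 : S ∈ 𝓝 (0 : E) := (hS ▸ isOpen_lt hf.continuous continuous_const).mem_nhds h0
  have hpos : 0 < gauge S y :=
    (gauge_pos (absorbent_nhds_zero hS0) (NormedSpace.isVonNBounded_of_isBounded ℝ hSb)).2 hy
  have hzero {x : E} (hx : x ≠ 0) : f ((gauge S x)⁻¹ • x) = 0 :=
    frontier_lt_subset_eq hf.continuous continuous_const
      (hS ▸ inv_gauge_smul_mem_frontier hSc hS0 hSb hx)
  have hfr := inv_gauge_smul_mem_frontier hSc hS0 hSb hy
  have hne : fderiv ℝ f ((gauge S y)⁻¹ • y) y ≠ 0 := by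
    have := fderiv_apply_self_ne_zero_of_mem_frontier hdiff hS hSc h0 hfr (hdf _ hfr)
    rw [map_smul, smul_eq_mul] at this
    exact right_ne_zero_of_mul this
  have hinv : ContDiffAt ℝ (⊤ : ℕ∞) (fun x => (gauge S x)⁻¹) y :=
    contDiffAt_of_eventually_apply_eq (Φ := fun p => f (p.2 • p.1)) (by simp)
      (hf.comp (contDiff_snd.smul contDiff_fst)).contDiffAt
      ((continuous_gauge hSc hS0).continuousAt.inv₀ hpos.ne')
      ((eventually_ne_nhds hy).mono fun x hx => (hzero hx).trans (hzero hy).symm)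
      ((fderiv_comp_snd_smul_fst hdiff y _).trans_ne hne)
  exact inv_inv (gauge S) ▸ hinv.inv (inv_ne_zero hpos.ne')

lemma contDiff_smoothRamp_gauge [CompleteSpace E] (hf : ContDiff ℝ (⊤ : ℕ∞) f)
    (hS : S = {x | f x < 0}) (hSc : Convex ℝ S) (hSb : Bornology.IsBounded S) (h0 : (0 : E) ∈ S)
    (hdf : ∀ x ∈ frontier S, fderiv ℝ f x ≠ 0) :
    ContDiff ℝ (⊤ : ℕ∞) fun x => smoothRamp (3 * gauge S x - 1) := by
  have hS0 : S ∈ 𝓝 (0 : E) := (hS ▸ isOpen_lt hf.continuous continuous_const).mem_nhds h0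
  refine contDiff_iff_contDiffAt.2 fun x => ?_
  rcases eq_or_ne x 0 with rfl | hx
  · have hlt : ∀ᶠ y in 𝓝 (0 : E), 3 * gauge S y - 1 < 0 :=
      (((continuous_gauge hSc hS0).const_mul 3).sub continuous_const).continuousAt
        |>.eventually_lt_const (by simp)
    exact contDiffAt_const.congr_of_eventuallyEq (hlt.mono fun y hy => smoothRamp_of_nonpos hy.le)
  · exact contDiff_smoothRamp.contDiffAt.comp x
      ((contDiffAt_const.mul (contDiffAt_gauge hf hS hSc hSb h0 hdf hx)).sub contDiffAt_const)

lemma convexOn_smoothRamp_gauge (hSc : Convex ℝ S) (hS : Absorbent ℝ S) :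
    ConvexOn ℝ univ fun x => smoothRamp (3 * gauge S x - 1) := by
  refine ⟨convex_univ, fun x _ y _ a b ha hb hab => ?_⟩
  have hgauge : gauge S (a • x + b • y) ≤ a * gauge S x + b * gauge S y := by
    simpa only [gauge_smul_of_nonneg ha, gauge_smul_of_nonneg hb, smul_eq_mul] using
      gauge_add_le hSc hS (a • x) (b • y)
  calc smoothRamp (3 * gauge S (a • x + b • y) - 1)
      ≤ smoothRamp (a • (3 * gauge S x - 1) + b • (3 * gauge S y - 1)) :=
        monotone_smoothRamp (by rw [smul_eq_mul, smul_eq_mul]; linarith)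
    _ ≤ a • smoothRamp (3 * gauge S x - 1) + b • smoothRamp (3 * gauge S y - 1) :=
        convexOn_smoothRamp.2 (mem_univ _) (mem_univ _) ha hb hab

lemma one_le_smoothRamp_two : 1 ≤ smoothRamp 2 :=
  le_trans (by norm_num) (sub_one_le_smoothRamp 2)

lemma smoothRamp_lt_smoothRamp_two_iff {r : ℝ} (hr : 0 ≤ r) :
    smoothRamp (3 * r - 1) < smoothRamp 2 ↔ r < 1 := by
  constructor
  · contrapose!
    exact fun h => monotone_smoothRamp (by linarith)
  · intro h
    have hconv := convexOn_smoothRamp.2 (mem_univ 2) (mem_univ (-1)) hr (sub_nonneg.2 h.le)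
      (by ring)
    rw [smoothRamp_of_nonpos (by norm_num : (-1 : ℝ) ≤ 0), smul_zero, add_zero, smul_eq_mul,
      smul_eq_mul, smul_eq_mul, show r * 2 + (1 - r) * -1 = 3 * r - 1 by ring] at hconv
    exact hconv.trans_lt (mul_lt_of_lt_one_left (one_pos.trans_le one_le_smoothRamp_two) h)

lemma exists_contDiff_convexOn_eq_setOf_lt_one_of_zero_mem [CompleteSpace E]
    (hf : ContDiff ℝ (⊤ : ℕ∞) f) (hS : S = {x | f x < 0}) (hSc : Convex ℝ S)
    (hSb : Bornology.IsBounded S) (h0 : (0 : E) ∈ S) (hdf : ∀ x ∈ frontier S, fderiv ℝ f x ≠ 0) :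
    ∃ ψ : E → ℝ, ContDiff ℝ (⊤ : ℕ∞) ψ ∧ ConvexOn ℝ univ ψ ∧ 0 ≤ ψ ∧ S = {x | ψ x < 1} := by
  have hSo : IsOpen S := hS ▸ isOpen_lt hf.continuous continuous_const
  have hpos : 0 < smoothRamp 2 := one_pos.trans_le one_le_smoothRamp_two
  have hconv := (convexOn_smoothRamp_gauge hSc (absorbent_nhds_zero (hSo.mem_nhds h0))).smul
    (inv_nonneg.2 hpos.le)
  refine ⟨fun x => (smoothRamp 2)⁻¹ • smoothRamp (3 * gauge S x - 1),
    (contDiff_smoothRamp_gauge hf hS hSc hSb h0 hdf).const_smul _, hconv,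
    fun x => mul_nonneg (inv_nonneg.2 hpos.le) (smoothRamp_nonneg _), ?_⟩
  simp only [smul_eq_mul, inv_mul_lt_one₀ hpos, smoothRamp_lt_smoothRamp_two_iff (gauge_nonneg _)]
  exact (setOfPred_gauge_lt_one_eq_self_of_isOpen hSc h0 hSo).symm

lemma exists_contDiff_convexOn_eq_setOf_lt_one [CompleteSpace E]
    (hf : ContDiff ℝ (⊤ : ℕ∞) f) (hS : S = {x | f x < 0}) (hSc : Convex ℝ S)
    (hSb : Bornology.IsBounded S) (hSn : S.Nonempty) (hdf : ∀ x ∈ frontier S, fderiv ℝ f x ≠ 0) :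
    ∃ ψ : E → ℝ, ContDiff ℝ (⊤ : ℕ∞) ψ ∧ ConvexOn ℝ univ ψ ∧ 0 ≤ ψ ∧ S = {x | ψ x < 1} := by
  obtain ⟨x₀, hx₀⟩ := hSn
  obtain ⟨ψ, hψ, hψc, hψ0, hψS⟩ := exists_contDiff_convexOn_eq_setOf_lt_one_of_zero_mem
    (S := (fun y => x₀ + y) ⁻¹' S) (f := fun y => f (x₀ + y))
    (hf.comp (contDiff_const.add contDiff_id)) (by rw [hS]; rfl)
    (hSc.translate_preimage_right x₀)
    ((IsometryEquiv.addLeft x₀).isometry.antilipschitz.isBounded_preimage hSb)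
    (by simpa using hx₀) fun y hy => by
      rw [fderiv_comp_add_left]
      exact hdf _ (((Homeomorph.addLeft x₀).preimage_frontier S).symm.subset hy)
  refine ⟨fun x => ψ (-x₀ + x), hψ.comp (contDiff_const.add contDiff_id),
    hψc.translate_right (-x₀), fun x => hψ0 (-x₀ + x), ?_⟩
  ext x
  simpa using Set.ext_iff.1 hψS (-x₀ + x)

end ConvexDefiningFunction

section KeyIdentity

variable {d : ℕ} {Ω : Set (Euc d)} {e u v φ : Euc d → ℂ} {v' a : Fin d → Euc d → ℂ}
  {b : Fin d → Fin d → Euc d → ℂ}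

lemma HasL2Grad.mul_of_univ (hΩo : IsOpen Ω) (hΩb : Bornology.IsBounded Ω) (hΩc : Convex ℝ Ω)
    (hv : HasL2Grad Ω Ω v v') (he : ContDiff ℝ (⊤ : ℕ∞) e)
    (he₀ : HasL2Grad Ω univ e fun i => pd i e) :
    HasL2Grad Ω univ (fun x => e x * v x) fun i x => pd i e x * v x + e x * v' i x := by
  have hmul := hv.smooth_mul hΩb he
  refine of_integral_eq_zero hmul.memL2 hmul.memL2_grad fun i φ hφ => ?_
  exact (((he₀.smooth_mul hΩb hφ.1).hasZeroIntegral_mul hΩo hΩb hΩc hv.memL2 (hv.memL2_grad i)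
    (hv.isWeakDeriv i)).congr (Eventually.of_forall fun x => by ring)).integral_eq_zero

lemma HasL2Grad.hasZeroIntegral_curl_pd (hu : HasL2Grad Ω univ u a) (hφ : IsTestFun univ φ)
    (i j : Fin d) :
    HasZeroIntegral (volume.restrict Ω) fun x => a i x * pd j φ x - a j x * pd i φ x := by
  refine ((hu.hasZeroIntegral i (hφ.pd j)).sub (hu.hasZeroIntegral j (hφ.pd i))).congr
    (Eventually.of_forall fun x => ?_)
  simp only [pd_comm hφ.1 i j x]
  ring

lemma HasL2Grad.tangential (hΩo : IsOpen Ω) (hΩb : Bornology.IsBounded Ω) (hΩc : Convex ℝ Ω)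
    (he : ContDiff ℝ (⊤ : ℕ∞) e) (he₀ : HasL2Grad Ω univ e fun i => pd i e)
    (hu : HasL2Grad Ω univ u a) (hb : ∀ j, HasL2Grad Ω Ω (a j) fun i => b i j) (i j : Fin d) :
    HasL2Grad Ω univ (fun x => pd i e x * a j x - pd j e x * a i x)
      fun k x => (pd k (pd i e) x * a j x + pd i e x * b k j x)
        - (pd k (pd j e) x * a i x + pd j e x * b k i x) := by
  have hint := ((hb j).smooth_mul hΩb (contDiff_pd he i)).sub
    ((hb i).smooth_mul hΩb (contDiff_pd he j))
  refine of_integral_eq_zero hint.memL2 hint.memL2_grad fun k φ hφ => ?_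
  have hsymm := (hu.mono (subset_univ Ω)).ae_symm hΩo hb
  have hcurl := he₀.hasZeroIntegral_curl hΩo hΩb hΩc ((hb k).smooth_mul hΩb hφ.1) j i
  have hcurl_j := hu.hasZeroIntegral_curl_pd (hφ.mul_left (contDiff_pd he i)) j k
  have hcurl_i := hu.hasZeroIntegral_curl_pd (hφ.mul_left (contDiff_pd he j)) i k
  refine (((hcurl.add hcurl_j).sub hcurl_i).congr ?_).integral_eq_zero
  filter_upwards [hsymm j k, hsymm i k] with x hjk hik
  have hpd (p q : Fin d) : pd p (fun y => pd q e y * φ y) x =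
      pd p (pd q e) x * φ x + pd q e x * pd p φ x :=
    pd_mul ((contDiff_pd he q).differentiable (by simp) x) (hφ.differentiable x) p
  simp only [hpd, hjk, hik, pd_comm he i j x]
  ring

lemma sum_sum_mul_sub_mul_eq_zero {ι R : Type*} [Fintype ι] [CommRing R] {b : ι → ι → R}
    (hb : ∀ i j, b i j = b j i) (g a : ι → R) :
    ∑ i, ∑ j, b i j * (g i * a j - g j * a i) = 0 := by
  simp only [mul_sub, Finset.sum_sub_distrib, sub_eq_zero]
  rw [Finset.sum_comm]
  exact Finset.sum_congr rfl fun i _ => Finset.sum_congr rfl fun j _ => by rw [hb i j]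

lemma hasZeroIntegral_hessian_sub (hΩo : IsOpen Ω) (hΩb : Bornology.IsBounded Ω)
    (hΩc : Convex ℝ Ω) (he : ContDiff ℝ (⊤ : ℕ∞) e) (he₀ : HasL2Grad Ω univ e fun i => pd i e)
    (hu : HasL2Grad Ω univ u a) (hb : ∀ j, HasL2Grad Ω Ω (a j) fun i => b i j) :
    HasZeroIntegral (volume.restrict Ω) fun x => ∑ i, ∑ j,
      (e x * (b i i x * (starRingEnd ℂ) (b j j x) - b i j x * (starRingEnd ℂ) (b i j x))
      - (pd i (pd j e) x * a i x * (starRingEnd ℂ) (a j x)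
        - pd i (pd i e) x * a j x * (starRingEnd ℂ) (a j x))) := by
  have hsymm := (hu.mono (subset_univ Ω)).ae_symm hΩo hb
  have hcurl (i j : Fin d) :=
    ((hb j).conj.mul_of_univ hΩo hΩb hΩc he he₀).hasZeroIntegral_curl hΩo hΩb hΩc (hb i) i j
  have htang (i j : Fin d) :=
    (HasL2Grad.tangential hΩo hΩb hΩc he he₀ hu hb i j).hasZeroIntegral_mul hΩo hΩb hΩc
      (hb j).conj.memL2 ((hb j).conj.memL2_grad i) ((hb j).conj.isWeakDeriv i)
  refine (HasZeroIntegral.sum (s := Finset.univ) fun i _ =>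
    HasZeroIntegral.sum (s := Finset.univ) fun j _ => (hcurl i j).add (htang i j)).congr ?_
  filter_upwards [ae_all_iff.2 fun i => ae_all_iff.2 (hsymm i)] with x hx
  rw [← sub_eq_zero, ← sum_sum_mul_sub_mul_eq_zero
    (fun i j => congrArg (starRingEnd ℂ) (hx i j)) (fun i => pd i e x) fun i => a i x]
  simp only [← Finset.sum_sub_distrib]
  refine Finset.sum_congr rfl fun i _ => Finset.sum_congr rfl fun j _ => ?_
  rw [hx j i]
  ring

end KeyIdentity

section Concavity

variable {E : Type*} [NormedAddCommGroup E] [NormedSpace ℝ E]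

lemma fderiv_fderiv_apply_self_nonpos_of_concaveOn {η : E → ℝ} (hη : Differentiable ℝ η)
    (hc : ConcaveOn ℝ univ η) {x : E} (hx : DifferentiableAt ℝ (fderiv ℝ η) x) (v : E) :
    fderiv ℝ (fderiv ℝ η) x v v ≤ 0 := by
  have hline (t : ℝ) : HasDerivAt (AffineMap.lineMap (k := ℝ) x (x + v)) v t := by
    simpa using AffineMap.hasDerivAt_lineMap (a := x) (b := x + v) (x := t)
  have hderiv (t : ℝ) : HasDerivAt (η ∘ AffineMap.lineMap x (x + v))
      (fderiv ℝ η (AffineMap.lineMap x (x + v) t) v) t :=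
    (hη _).hasFDerivAt.comp_hasDerivAt t (hline t)
  have hanti : Antitone fun t : ℝ => fderiv ℝ η (AffineMap.lineMap x (x + v) t) v := by
    have := (hc.comp_affineMap (AffineMap.lineMap (k := ℝ) x (x + v))).antitoneOn_deriv
      fun t _ => (hderiv t).differentiableAt
    rwa [funext fun t => (hderiv t).deriv, preimage_univ, antitoneOn_univ] at this
  have hderiv₂ : HasDerivAt (fun t : ℝ => fderiv ℝ η (AffineMap.lineMap x (x + v) t) v)
      (fderiv ℝ (fderiv ℝ η) x v v) 0 := by
    have hx' : HasFDerivAt (fderiv ℝ η) (fderiv ℝ (fderiv ℝ η) x)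
        (AffineMap.lineMap x (x + v) (0 : ℝ)) := by
      simpa using hx.hasFDerivAt
    simpa using (hx'.comp_hasDerivAt 0 (hline 0)).clm_apply (hasDerivAt_const (0 : ℝ) v)
  exact hderiv₂.nonpos_of_antitone hanti

lemma sum_sum_mul_apply_sub_nonneg {ι : Type*} [Fintype ι] {B : E →L[ℝ] E →L[ℝ] ℝ}
    (hB : ∀ v, B v v ≤ 0) (w : ι → E) (s : ι → ℝ) :
    0 ≤ ∑ i, ∑ j, (s i * s j * B (w i) (w j) - s j ^ 2 * B (w i) (w i)) := by
  have hswap : ∑ i, ∑ j, (s i * s j * B (w i) (w j) - s j ^ 2 * B (w i) (w i)) =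
      ∑ i, ∑ j, (s j * s i * B (w j) (w i) - s i ^ 2 * B (w j) (w j)) := Finset.sum_comm
  have hadd : 0 ≤ ∑ i, ∑ j, ((s i * s j * B (w i) (w j) - s j ^ 2 * B (w i) (w i)) +
      (s j * s i * B (w j) (w i) - s i ^ 2 * B (w j) (w j))) := by
    refine Finset.sum_nonneg fun i _ => Finset.sum_nonneg fun j _ => ?_
    have h := hB (s j • w i - s i • w j)
    simp only [map_sub, map_smul, _root_.sub_apply, _root_.smul_apply, smul_eq_mul] at h
    linarith
  simp only [Finset.sum_add_distrib] at hadd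
  linarith

lemma re_sum_sum_apply_mul_conj_sub_nonneg {ι : Type*} [Fintype ι] {B : E →L[ℝ] E →L[ℝ] ℝ}
    (hB : ∀ v, B v v ≤ 0) (w : ι → E) (z : ι → ℂ) :
    0 ≤ (∑ i, ∑ j, ((B (w i) (w j) : ℂ) * z i * (starRingEnd ℂ) (z j) -
      (B (w i) (w i) : ℂ) * z j * (starRingEnd ℂ) (z j))).re := by
  refine (add_nonneg (sum_sum_mul_apply_sub_nonneg hB w fun i => (z i).re)
    (sum_sum_mul_apply_sub_nonneg hB w fun i => (z i).im)).trans_eq ?_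
  simp only [Complex.re_sum, ← Finset.sum_add_distrib]
  refine Finset.sum_congr rfl fun i _ => Finset.sum_congr rfl fun j _ => ?_
  simp only [Complex.sub_re, Complex.mul_re, Complex.mul_im, Complex.ofReal_re, Complex.ofReal_im,
    Complex.conj_re, Complex.conj_im]
  ring

end Concavity

section HessianBound

variable {d : ℕ} {Ω : Set (Euc d)} {η : Euc d → ℝ} {u : Euc d → ℂ} {a : Fin d → Euc d → ℂ}
  {b : Fin d → Fin d → Euc d → ℂ}

lemma pd_pd_ofReal (hη : ContDiff ℝ (⊤ : ℕ∞) η) (i j : Fin d) (x : Euc d) :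
    pd i (pd j fun y => (η y : ℂ)) x = (fderiv ℝ (fderiv ℝ η) x (EuclideanSpace.single i (1 : ℝ))
      (EuclideanSpace.single j (1 : ℝ)) : ℂ) := by
  have hdiff := ((hη.fderiv_right (m := (⊤ : ℕ∞)) (by simp)).differentiable (by simp) x)
  have hpd : (pd j fun y => (η y : ℂ)) =
      fun y => (fderiv ℝ η y (EuclideanSpace.single j (1 : ℝ)) : ℂ) :=
    funext fun y => pd_ofReal (hη.differentiable (by simp) y) j
  have h := hdiff.hasFDerivAt.clm_apply (hasFDerivAt_const (EuclideanSpace.single j (1 : ℝ)) x)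
  rw [hpd, pd_ofReal h.differentiableAt, h.fderiv]
  simp

lemma sum_sum_mul_conj_sub_mul_conj {ι : Type*} [Fintype ι] (m : ι → ι → ℂ) :
    ∑ i, ∑ j, (m i i * (starRingEnd ℂ) (m j j) - m i j * (starRingEnd ℂ) (m i j)) =
      ((‖∑ i, m i i‖ ^ 2 - ∑ i, ∑ j, ‖m i j‖ ^ 2 : ℝ) : ℂ) := by
  push_cast
  simp only [Finset.sum_sub_distrib, ← Complex.mul_conj', map_sum, Finset.sum_mul_sum]

lemma MemL2.integrable_sq_norm {f : Euc d → ℂ} (hf : MemL2 Ω f) :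
    Integrable (fun x => ‖f x‖ ^ 2) (volume.restrict Ω) :=
  (memLp_two_iff_integrable_sq_norm hf.1).1 hf

lemma integrable_sq_norm_sum_sub_sum_sq_norm (hb : ∀ i j, MemL2 Ω (b i j)) :
    Integrable (fun x => ‖∑ i, b i i x‖ ^ 2 - ∑ i, ∑ j, ‖b i j x‖ ^ 2) (volume.restrict Ω) :=
  (MemL2.integrable_sq_norm (memLp_finsetSum _ fun i _ => hb i i)).sub <|
    integrable_finsetSum _ fun i _ => integrable_finsetSum _ fun j _ => (hb i j).integrable_sq_norm

lemma setIntegral_mul_sq_norm_sum_sub_nonneg (hΩb : Bornology.IsBounded Ω) (hΩc : Convex ℝ Ω)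
    (hη : ContDiff ℝ (⊤ : ℕ∞) η) (hηc : ConcaveOn ℝ univ η) (hηΩ : Ω = {x | 0 < η x})
    (hη₁ : ∀ x ∈ Ω, η x ≤ 1) (hu : HasL2Grad Ω univ u a)
    (hb : ∀ j, HasL2Grad Ω Ω (a j) fun i => b i j) :
    0 ≤ ∫ x in Ω, η x * (‖∑ i, b i i x‖ ^ 2 - ∑ i, ∑ j, ‖b i j x‖ ^ 2) := by
  have hΩo : IsOpen Ω := hηΩ ▸ isOpen_lt continuous_const hη.continuous
  have hηC : ContDiff ℝ (⊤ : ℕ∞) fun x => (η x : ℂ) := Complex.ofRealCLM.contDiff.comp hη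
  have hzero := hasZeroIntegral_hessian_sub hΩo hΩb hΩc hηC
    (hasL2Grad_univ_of_eq_setOf_pos hΩb hη hηΩ) hu hb
  have hint : Integrable (fun x => η x * (‖∑ i, b i i x‖ ^ 2 - ∑ i, ∑ j, ‖b i j x‖ ^ 2))
      (volume.restrict Ω) := by
    refine (integrable_sq_norm_sum_sub_sum_sq_norm fun i j => (hb j).memL2_grad i).bdd_mul (c := 1)
      hη.continuous.aestronglyMeasurable ?_
    filter_upwards [ae_restrict_mem hΩo.measurableSet] with x hx
    have hpos : 0 < η x := by rwa [hηΩ] at hx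
    exact (Real.norm_of_nonneg hpos.le).trans_le (hη₁ x hx)
  calc (0 : ℝ) = ∫ x in Ω, _ :=
        ((integral_re hzero.integrable).trans (congrArg Complex.re hzero.integral_eq_zero)).symm
    _ ≤ _ := integral_mono hzero.integrable.re hint fun x => ?_
  have hconc := re_sum_sum_apply_mul_conj_sub_nonneg
    (fderiv_fderiv_apply_self_nonpos_of_concaveOn (hη.differentiable (by simp)) hηc
      ((hη.fderiv_right (m := (⊤ : ℕ∞)) (by simp)).differentiable (by simp) x))
    (fun i => EuclideanSpace.single i (1 : ℝ)) fun i => a i x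
  have hsum := congrArg (fun z : ℂ => (η x * z).re)
    (sum_sum_mul_conj_sub_mul_conj fun i j => b i j x)
  simp only [← pd_pd_ofReal hη, Complex.re_ofReal_mul, Complex.ofReal_re] at hsum hconc
  rw [← hsum, ← Complex.re_ofReal_mul, ← sub_nonneg]
  refine hconc.trans_eq ?_
  rw [RCLike.re_to_complex, ← Complex.sub_re]
  simp only [Finset.mul_sum, ← Finset.sum_sub_distrib, sub_sub_cancel]

lemma HasSmoothBoundary.exists_seq_concaveOn_tendsto_one (hΩs : HasSmoothBoundary Ω)
    (hΩb : Bornology.IsBounded Ω) (hΩc : Convex ℝ Ω) (hΩn : Ω.Nonempty) :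
    ∃ η : ℕ → Euc d → ℝ, (∀ k, ContDiff ℝ (⊤ : ℕ∞) (η k)) ∧ (∀ k, ConcaveOn ℝ univ (η k)) ∧
      (∀ k, Ω = {x | 0 < η k x}) ∧ (∀ k x, η k x ≤ 1) ∧
      ∀ x ∈ Ω, Tendsto (fun k => η k x) atTop (𝓝 1) := by
  obtain ⟨f, hf, hfΩ, hdf⟩ := hΩs
  obtain ⟨ψ, hψ, hψc, hψ₀, hψΩ⟩ :=
    exists_contDiff_convexOn_eq_setOf_lt_one hf hfΩ hΩc hΩb hΩn hdf
  refine ⟨fun k x => 1 - ψ x ^ (k + 1), fun k => contDiff_const.sub (hψ.pow _),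
    fun k => (concaveOn_const 1 convex_univ).sub (hψc.pow (fun x _ => hψ₀ x) _),
    fun k => ?_, fun k x => sub_le_self _ (pow_nonneg (hψ₀ x) _), fun x hx => ?_⟩
  · simp only [hψΩ, sub_pos, pow_lt_one_iff_of_nonneg (hψ₀ _) k.succ_ne_zero]
  · have hx₁ : ψ x < 1 := by rwa [hψΩ] at hx
    simpa using ((tendsto_pow_atTop_nhds_zero_of_lt_one (hψ₀ x) hx₁).comp
      (tendsto_add_atTop_nat 1)).const_sub 1

lemma setIntegral_sq_norm_sum_sub_nonneg (hΩs : HasSmoothBoundary Ω)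
    (hΩb : Bornology.IsBounded Ω) (hΩc : Convex ℝ Ω) (hu : HasL2Grad Ω univ u a)
    (hb : ∀ j, HasL2Grad Ω Ω (a j) fun i => b i j) :
    0 ≤ ∫ x in Ω, (‖∑ i, b i i x‖ ^ 2 - ∑ i, ∑ j, ‖b i j x‖ ^ 2) := by
  obtain rfl | hΩn := Ω.eq_empty_or_nonempty
  · simp
  obtain ⟨η, hη, hηc, hηΩ, hη₁, hηt⟩ := hΩs.exists_seq_concaveOn_tendsto_one hΩb hΩc hΩn
  have hΩm : MeasurableSet Ω :=
    hηΩ 0 ▸ (isOpen_lt continuous_const (hη 0).continuous).measurableSet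
  have hint := integrable_sq_norm_sum_sub_sum_sq_norm fun i j => (hb j).memL2_grad i
  refine ge_of_tendsto' (tendsto_integral_of_dominated_convergence _
    (fun k => (hη k).continuous.aestronglyMeasurable.mul hint.1) hint.norm (fun k => ?_) ?_)
    fun k => setIntegral_mul_sq_norm_sum_sub_nonneg hΩb hΩc (hη k) (hηc k) (hηΩ k)
      (fun x _ => hη₁ k x) hu hb
  · filter_upwards [ae_restrict_mem hΩm] with x hx
    have hpos : 0 < η k x := by rwa [hηΩ k] at hx
    rw [Pi.mul_apply, norm_mul, Real.norm_of_nonneg hpos.le]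
    exact mul_le_of_le_one_left (norm_nonneg _) (hη₁ k x)
  · filter_upwards [ae_restrict_mem hΩm] with x hx
    simpa using (hηt x hx).mul_const (‖∑ i, b i i x‖ ^ 2 - ∑ i, ∑ j, ‖b i j x‖ ^ 2)

lemma HasL2Grad.sum_sum_sq_L2N_le (hΩs : HasSmoothBoundary Ω)
    (hΩb : Bornology.IsBounded Ω) (hΩc : Convex ℝ Ω) (hu : HasL2Grad Ω univ u a)
    (hb : ∀ j, HasL2Grad Ω Ω (a j) fun i => b i j) :
    ∑ i, ∑ j, L2N Ω (b i j) ^ 2 ≤ L2N Ω (fun x => ∑ i, b i i x) ^ 2 := by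
  have hbm (i j : Fin d) : MemL2 Ω (b i j) := (hb j).memL2_grad i
  have hbi (i : Fin d) := integrable_finsetSum Finset.univ fun j _ => (hbm i j).integrable_sq_norm
  have htr : MemL2 Ω fun x => ∑ i, b i i x := memLp_finsetSum _ fun i _ => hbm i i
  have hnonneg := setIntegral_sq_norm_sum_sub_nonneg hΩs hΩb hΩc hu hb
  rw [integral_sub htr.integrable_sq_norm (integrable_finsetSum _ fun i _ => hbi i),
    integral_finsetSum _ fun i _ => hbi i, ← htr.sq_L2N, sub_nonneg] at hnonneg
  refine (Finset.sum_congr rfl fun i _ => ?_).trans_le hnonneg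
  rw [integral_finsetSum _ fun j _ => (hbm i j).integrable_sq_norm]
  exact Finset.sum_congr rfl fun j _ => (hbm i j).sq_L2N

end HessianBound

section VariableCoefficient

variable {d : ℕ} {Ω : Set (Euc d)} {ε u φ : Euc d → ℂ} {u' : Fin d → Euc d → ℂ}

lemma hasZeroIntegral_pd_mul_add_mul_pd (hε : ∀ x ∈ Ω, DifferentiableAt ℝ ε x)
    (hεL : MemLp ε ∞ (volume.restrict Ω)) {i : Fin d}
    (hεL' : MemLp (pd i ε) ∞ (volume.restrict Ω)) (hφ : IsTestFun Ω φ) :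
    HasZeroIntegral (volume.restrict Ω) fun x => pd i ε x * φ x + ε x * pd i φ x := by
  have hint {f ψ : Euc d → ℂ} (hf : MemLp f ∞ (volume.restrict Ω)) (hψ : IsTestFun Ω ψ) :
      IntegrableOn (fun x => f x * ψ x) Ω :=
    (hψ.1.continuous.integrable_of_hasCompactSupport hψ.2.1).restrict.mul_of_top_right hf
  have hglobal {f ψ : Euc d → ℂ} (hf : MemLp f ∞ (volume.restrict Ω)) (hψ : IsTestFun Ω ψ) :
      Integrable fun x => f x * ψ x :=
    (hint hf hψ).integrable_of_forall_notMem_eq_zero fun x hx => by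
      rw [hψ.eq_zero_of_notMem hx, mul_zero]
  refine ⟨(hint hεL' hφ).add (hint hεL (hφ.pd i)), ?_⟩
  rw [integral_add (hint hεL' hφ) (hint hεL (hφ.pd i)), hφ.setIntegral_mul,
    (hφ.pd i).setIntegral_mul, add_eq_zero_iff_neg_eq]
  exact (integral_mul_fderiv_eq_neg_fderiv_mul_of_integrable (hglobal hεL' hφ)
    (hglobal hεL (hφ.pd i)) (hglobal hεL hφ) (fun x hx => hε x (hφ.2.2 hx))
    fun x _ => hφ.differentiable x).symm

lemma IsTestFun.hasL2Grad_mul (hφ : IsTestFun Ω φ) (hε : ∀ x ∈ Ω, DifferentiableAt ℝ ε x)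
    (hεL : MemLp ε ∞ (volume.restrict Ω))
    (hεL' : ∀ i, MemLp (_root_.pd i ε) ∞ (volume.restrict Ω)) :
    HasL2Grad Ω univ (fun x => ε x * φ x)
      fun i x => _root_.pd i ε x * φ x + ε x * _root_.pd i φ x := by
  refine .of_integral_eq_zero (hφ.memL2.memLp_top_mul hεL)
    (fun i => MemLp.add (hφ.memL2.memLp_top_mul (hεL' i)) ((hφ.pd i).memL2.memLp_top_mul hεL))
    fun i ψ hψ => ?_
  refine ((hasZeroIntegral_pd_mul_add_mul_pd hε hεL (hεL' i) (hφ.mul_left hψ.1)).congr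
    (Eventually.of_forall fun x => ?_)).integral_eq_zero
  simp only [pd_mul (hψ.differentiable x) (hφ.differentiable x)]
  ring

lemma HasL2Grad.mul_of_differentiableAt (hΩo : IsOpen Ω) (hΩb : Bornology.IsBounded Ω)
    (hΩc : Convex ℝ Ω) (h : HasL2Grad Ω Ω u u') (hε : ∀ x ∈ Ω, DifferentiableAt ℝ ε x)
    (hεL : MemLp ε ∞ (volume.restrict Ω)) (hεL' : ∀ i, MemLp (pd i ε) ∞ (volume.restrict Ω)) :
    HasL2Grad Ω Ω (fun x => ε x * u x) fun i x => pd i ε x * u x + ε x * u' i x := by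
  refine of_integral_eq_zero (h.memL2.memLp_top_mul hεL) (fun i =>
    MemLp.add (h.memL2.memLp_top_mul (hεL' i)) ((h.memL2_grad i).memLp_top_mul hεL))
    fun i φ hφ => ?_
  exact (((hφ.hasL2Grad_mul hε hεL hεL').hasZeroIntegral_mul hΩo hΩb hΩc h.memL2
    (h.memL2_grad i) (h.isWeakDeriv i)).congr
    (Eventually.of_forall fun x => by ring)).integral_eq_zero

lemma MemL2.mul_sq_L2N_le_re_setIntegral {g : Euc d → ℂ} {t : ℝ} (hu : MemL2 Ω u)
    (hg : MemLp g ∞ (volume.restrict Ω)) (hgt : ∀ᵐ x ∂volume.restrict Ω, t ≤ (g x).re) :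
    t * L2N Ω u ^ 2 ≤ (∫ x in Ω, g x * u x * (starRingEnd ℂ) (u x)).re := by
  have hint := (hu.memLp_top_mul hg).integrable_mul hu.conj
  rw [hu.sq_L2N, ← integral_const_mul]
  refine (integral_mono_ae (hu.integrable_sq_norm.const_mul t) hint.re ?_).trans_eq
    (integral_re hint)
  filter_upwards [hgt] with x hx
  rw [mul_assoc, Complex.mul_conj', ← Complex.ofReal_pow, RCLike.re_to_complex,
    Complex.re_mul_ofReal]
  exact mul_le_mul_of_nonneg_right hx (sq_nonneg _)

lemma MemL2.ae_eq_zero_of_L2N (hu : MemL2 Ω u) (h : L2N Ω u = 0) : u =ᵐ[volume.restrict Ω] 0 :=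
  (eLpNorm_eq_zero_iff hu.1 two_ne_zero).1 <|
    ((ENNReal.toReal_eq_zero_iff _).1 h).resolve_right hu.2.ne

lemma HasL2Grad.ae_eq_zero_of_grad_ae_eq_zero (hΩo : IsOpen Ω) (hΩb : Bornology.IsBounded Ω)
    (hΩc : Convex ℝ Ω) (h : HasL2Grad Ω univ u u') {i : Fin d}
    (hi : u' i =ᵐ[volume.restrict Ω] 0) : u =ᵐ[volume.restrict Ω] 0 := by
  let L : Euc d →L[ℝ] ℂ := Complex.ofRealCLM ∘L EuclideanSpace.proj i
  have hpd (x : Euc d) : pd i L x = 1 := by simp [pd, L]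
  have hmul := (h.mono (subset_univ Ω)).smooth_mul hΩb L.contDiff
  -- Integrating `∂ᵢ(xᵢ |u|²) = |u|²` over `Ω`.
  have hzero := (h.conj.hasZeroIntegral_mul hΩo hΩb hΩc hmul.memL2 (hmul.memL2_grad i)
    (hmul.isWeakDeriv i)).congr (G := fun x => ((‖u x‖ ^ 2 : ℝ) : ℂ)) (by
      filter_upwards [hi] with x hx
      simp [hx, hpd, Complex.mul_conj'])
  have hsq := hzero.integral_eq_zero
  rw [integral_complex_ofReal, Complex.ofReal_eq_zero, ← h.memL2.sq_L2N] at hsq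
  exact h.memL2.ae_eq_zero_of_L2N (pow_eq_zero_iff two_ne_zero |>.1 hsq)

lemma HasL2Grad.ae_eq_zero_of_isWeakDeriv_mul_zero {θ : ℝ} (hθ : 0 < θ) (hΩo : IsOpen Ω)
    (hΩb : Bornology.IsBounded Ω) (hΩc : Convex ℝ Ω) (hεL : MemLp ε ∞ (volume.restrict Ω))
    (hεθ : ∀ᵐ x ∂volume.restrict Ω, θ ≤ (ε x).re) (h : HasL2Grad Ω univ u u') {i : Fin d}
    (hi : IsWeakDeriv Ω i (fun x => ε x * u' i x) 0) : u =ᵐ[volume.restrict Ω] 0 := by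
  refine h.ae_eq_zero_of_grad_ae_eq_zero hΩo hΩb hΩc (i := i)
    ((h.memL2_grad i).ae_eq_zero_of_L2N ?_)
  have hzero := (h.conj.hasZeroIntegral_mul hΩo hΩb hΩc ((h.memL2_grad i).memLp_top_mul hεL)
    MemLp.zero hi).integral_eq_zero
  have hle := (h.memL2_grad i).mul_sq_L2N_le_re_setIntegral hεL hεθ
  simp only [Pi.zero_apply, zero_mul, add_zero] at hzero
  rw [hzero, Complex.zero_re] at hle
  exact pow_eq_zero_iff two_ne_zero |>.1
    (le_antisymm (nonpos_of_mul_nonpos_right hle hθ) (sq_nonneg _))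

end VariableCoefficient

section UniquenessOfWeakDerivatives

variable {d : ℕ} {Ω : Set (Euc d)} {i : Fin d} {g v w φ ψ : Euc d → ℂ}

lemma IsTestFun.add (hφ : IsTestFun Ω φ) (hψ : IsTestFun Ω ψ) :
    IsTestFun Ω fun x => φ x + ψ x :=
  ⟨hφ.1.add hψ.1, hφ.2.1.add hψ.2.1, (tsupport_add φ ψ).trans (union_subset hφ.2.2 hψ.2.2)⟩

lemma locallyIntegrableOn_of_forall_isTestFun_mul (hΩ : IsOpen Ω)
    (h : ∀ φ, IsTestFun Ω φ → IntegrableOn (fun x => g x * φ x) Ω) :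
    LocallyIntegrableOn g Ω := by
  intro x hx
  obtain ⟨r, hr, hrΩ⟩ := Metric.isOpen_iff.1 hΩ x hx
  let ρ : ContDiffBump x := ⟨r / 4, r / 2, by positivity, by linarith⟩
  have hρ : IsTestFun Ω fun y => (ρ y : ℂ) :=
    isTestFun_ofReal ρ.contDiff ρ.hasCompactSupport <| ρ.tsupport_eq.trans_subset <|
      (Metric.closedBall_subset_ball (half_lt_self hr)).trans hrΩ
  refine ⟨Ω ∩ Metric.closedBall x (r / 4),
    inter_mem_nhdsWithin _ (Metric.closedBall_mem_nhds x (by positivity)), ?_⟩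
  refine ((h _ hρ).mono_set inter_subset_left).congr_fun (fun y hy => ?_)
    (hΩ.measurableSet.inter Metric.isClosed_closedBall.measurableSet)
  have hone : ρ y = 1 := ρ.one_of_mem_closedBall hy.2
  simp only [hone, Complex.ofReal_one, mul_one]

lemma IsWeakDeriv.ae_eq_of_forall_integrableOn (hΩ : IsOpen Ω) (hv : MemL2 Ω v)
    (hwv : IsWeakDeriv Ω i w v) (hwg : IsWeakDeriv Ω i w g)
    (hg : ∀ φ, IsTestFun Ω φ → IntegrableOn (fun x => g x * φ x) Ω) :
    g =ᵐ[volume.restrict Ω] v := by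
  have hzero := ae_restrict_eq_zero_of_integral_mul_isTestFun (f := fun x => g x - v x) hΩ
    ((locallyIntegrableOn_of_forall_isTestFun_mul hΩ hg).sub hv.locallyIntegrableOn)
    fun φ hφ => by
      simp only [sub_mul]
      rw [integral_sub (hg φ hφ) (hv.integrable_mul hφ.memL2)]
      linear_combination hwg φ hφ - hwv φ hφ
  exact hzero.mono fun x hx => sub_eq_zero.1 hx

/- Where `g * φ` is not integrable, its integral is `0` by convention, and so is `∫ w * pd i φ`.
If `g * φ` is integrable, then `g * (φ + φ₀)` is not, for one fixed `φ₀` with `g * φ₀` not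
integrable. -/
lemma IsWeakDeriv.zero_of_not_integrableOn (hw : MemL2 Ω w) (h : IsWeakDeriv Ω i w g)
    (hφ : IsTestFun Ω φ) (hgφ : ¬IntegrableOn (fun x => g x * φ x) Ω) :
    IsWeakDeriv Ω i w 0 := by
  have hjunk {ψ : Euc d → ℂ} (hψ : IsTestFun Ω ψ) (hgψ : ¬IntegrableOn (fun x => g x * ψ x) Ω) :
      ∫ x in Ω, w x * pd i ψ x = 0 := by
    rw [h ψ hψ, integral_undef hgψ, neg_zero]
  intro ψ hψ
  simp only [Pi.zero_apply, zero_mul, integral_zero, neg_zero]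
  by_cases hgψ : IntegrableOn (fun x => g x * ψ x) Ω
  · have hsum := hjunk (hψ.add hφ) fun hadd =>
      hgφ ((hadd.sub hgψ).congr (Eventually.of_forall fun x => by simp only [Pi.sub_apply]; ring))
    have hpd (x : Euc d) : w x * pd i (fun y => ψ y + φ y) x = w x * pd i ψ x + w x * pd i φ x := by
      rw [pd, fderiv_fun_add (hψ.differentiable x) (hφ.differentiable x), ← mul_add]
      rfl
    simp only [hpd] at hsum
    rwa [integral_add (hw.integrable_mul (hψ.pd i).memL2) (hw.integrable_mul (hφ.pd i).memL2),
      hjunk hφ hgφ, add_zero] at hsum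
  · exact hjunk hψ hgψ

lemma IsWeakDeriv.zero_or_ae_eq (hΩ : IsOpen Ω) (hw : MemL2 Ω w) (hv : MemL2 Ω v)
    (hwv : IsWeakDeriv Ω i w v) (hwg : IsWeakDeriv Ω i w g) :
    IsWeakDeriv Ω i w 0 ∨ g =ᵐ[volume.restrict Ω] v := by
  by_cases hg : ∀ φ, IsTestFun Ω φ → IntegrableOn (fun x => g x * φ x) Ω
  · exact .inr (hwv.ae_eq_of_forall_integrableOn hΩ hv hwg hg)
  · push Not at hg
    obtain ⟨φ, hφ, hgφ⟩ := hg
    exact .inl (hwg.zero_of_not_integrableOn hw hφ hgφ)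

end UniquenessOfWeakDerivatives

section EnergyEstimates

variable {d : ℕ} {Ω : Set (Euc d)} {ε κ f g u : Euc d → ℂ} {u' v w : Fin d → Euc d → ℂ}

lemma L2N_congr (h : f =ᵐ[volume.restrict Ω] g) : L2N Ω f = L2N Ω g :=
  congrArg ENNReal.toReal (eLpNorm_congr_ae h)

lemma L2N_eq_zero_of_ae_eq_zero (h : f =ᵐ[volume.restrict Ω] 0) : L2N Ω f = 0 := by
  rw [L2N_congr h, L2N, eLpNorm_zero, ENNReal.toReal_zero]

lemma L2N_nonneg : 0 ≤ L2N Ω f := ENNReal.toReal_nonneg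

lemma LinfN_nonneg : 0 ≤ LinfN Ω f := ENNReal.toReal_nonneg

lemma MemL2.L2N_sub_le (hf : MemL2 Ω f) (hg : MemL2 Ω g) :
    L2N Ω (fun x => f x - g x) ≤ L2N Ω f + L2N Ω g := by
  rw [L2N, L2N, L2N, ← ENNReal.toReal_add hf.2.ne hg.2.ne]
  exact ENNReal.toReal_mono (ENNReal.add_ne_top.2 ⟨hf.2.ne, hg.2.ne⟩)
    (eLpNorm_sub_le hf.1 hg.1 one_le_two)

lemma MemL2.L2N_le_mul (hf : MemL2 Ω f) {C : ℝ} (hC : 0 ≤ C)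
    (h : ∀ᵐ x ∂volume.restrict Ω, ‖g x‖ ≤ C * ‖f x‖) : L2N Ω g ≤ C * L2N Ω f := by
  rw [L2N, L2N, ← ENNReal.toReal_ofReal hC, ← ENNReal.toReal_mul]
  exact ENNReal.toReal_mono (ENNReal.mul_ne_top ENNReal.ofReal_ne_top hf.2.ne)
    (by simpa only [ENNReal.toReal_ofReal hC] using eLpNorm_le_mul_eLpNorm_of_ae_le_mul h 2)

lemma MemL2.norm_setIntegral_mul_conj_le (hf : MemL2 Ω f) (hg : MemL2 Ω g) :
    ‖∫ x in Ω, f x * (starRingEnd ℂ) (g x)‖ ≤ L2N Ω f * L2N Ω g := by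
  have hnorm {h : Euc d → ℂ} (hh : MemL2 Ω h) :
      (∫ x in Ω, ‖h x‖ ^ (2 : ℝ)) ^ (1 / (2 : ℝ)) = L2N Ω h := by
    simp only [Real.rpow_ofNat]
    rw [← hh.sq_L2N, ← Real.sqrt_eq_rpow, Real.sqrt_sq L2N_nonneg]
  refine (norm_integral_le_integral_norm _).trans ?_
  simp only [norm_mul, RCLike.norm_conj]
  rw [← hnorm hf, ← hnorm hg]
  exact integral_mul_norm_le_Lp_mul_Lq Real.HolderConjugate.two_two (by simpa [MemL2] using hf)
    (by simpa [MemL2] using hg)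

lemma ae_norm_le_LinfN (hκ : MemLp κ ∞ (volume.restrict Ω)) :
    ∀ᵐ x ∂volume.restrict Ω, ‖κ x‖ ≤ LinfN Ω κ := by
  filter_upwards [ae_le_eLpNormEssSup (f := κ)] with x hx
  rw [← eLpNorm_exponent_top] at hx
  simpa [LinfN] using ENNReal.toReal_mono hκ.2.ne hx

lemma HasL2Grad.sum_setIntegral_mul_conj (hΩo : IsOpen Ω) (hΩb : Bornology.IsBounded Ω)
    (hΩc : Convex ℝ Ω) (hu : HasL2Grad Ω univ u u') (hw : ∀ i, MemL2 Ω (w i))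
    (hv : ∀ i, MemL2 Ω (v i)) (hwv : ∀ i, IsWeakDeriv Ω i (w i) (v i)) :
    ∑ i, ∫ x in Ω, w i x * (starRingEnd ℂ) (u' i x) =
      -∫ x in Ω, (∑ i, v i x) * (starRingEnd ℂ) (u x) := by
  simp only [Finset.sum_mul]
  rw [integral_finsetSum _ fun i _ => (hv i).integrable_mul hu.memL2.conj,
    ← Finset.sum_neg_distrib]
  refine Finset.sum_congr rfl fun i _ => eq_neg_of_add_eq_zero_left ?_
  rw [← integral_add ((hw i).integrable_mul (hu.memL2_grad i).conj)
    ((hv i).integrable_mul hu.memL2.conj)]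
  exact (hu.conj.hasZeroIntegral_mul hΩo hΩb hΩc (hw i) (hv i) (hwv i)).integral_eq_zero

lemma HasL2Grad.sum_sq_L2N_le_mul (hΩo : IsOpen Ω) (hΩb : Bornology.IsBounded Ω)
    (hΩc : Convex ℝ Ω) (hu : HasL2Grad Ω univ u u') (hv : ∀ i, MemL2 Ω (v i))
    (hwv : ∀ i, IsWeakDeriv Ω i (u' i) (v i)) :
    ∑ i, L2N Ω (u' i) ^ 2 ≤ L2N Ω (fun x => ∑ i, v i x) * L2N Ω u := by
  have hsq (i : Fin d) : ∫ x in Ω, u' i x * (starRingEnd ℂ) (u' i x) =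
      ((L2N Ω (u' i) ^ 2 : ℝ) : ℂ) := by
    simp only [Complex.mul_conj', ← Complex.ofReal_pow]
    rw [integral_complex_ofReal, (hu.memL2_grad i).sq_L2N]
  have hgreen := hu.sum_setIntegral_mul_conj hΩo hΩb hΩc hu.memL2_grad hv hwv
  simp only [hsq, ← Complex.ofReal_sum] at hgreen
  have hdiv : MemL2 Ω fun x => ∑ i, v i x := memLp_finsetSum _ fun i _ => hv i
  have hle := hdiv.norm_setIntegral_mul_conj_le hu.memL2
  rw [← norm_neg, ← hgreen, Complex.norm_real] at hle
  exact (le_abs_self _).trans hle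

lemma HasL2Grad.mul_sum_sq_L2N_sub_le {θ μ : ℝ} (hΩo : IsOpen Ω) (hΩb : Bornology.IsBounded Ω)
    (hΩc : Convex ℝ Ω) (hεL : MemLp ε ∞ (volume.restrict Ω))
    (hεθ : ∀ᵐ x ∂volume.restrict Ω, θ ≤ (ε x).re) (hκL : MemLp κ ∞ (volume.restrict Ω))
    (hκμ : ∀ᵐ x ∂volume.restrict Ω, -μ ≤ (κ x).re) (hu : HasL2Grad Ω univ u u')
    (hv : ∀ i, MemL2 Ω (v i)) (hwv : ∀ i, IsWeakDeriv Ω i (fun x => ε x * u' i x) (v i)) :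
    θ * ∑ i, L2N Ω (u' i) ^ 2 - μ * L2N Ω u ^ 2 ≤
      L2N Ω (fun x => -(∑ i, v i x) + κ x * u x) * L2N Ω u := by
  have hdiv : MemL2 Ω fun x => ∑ i, v i x := memLp_finsetSum _ fun i _ => hv i
  have hκu := hu.memL2.memLp_top_mul hκL
  have hform : ∫ x in Ω, (-(∑ i, v i x) + κ x * u x) * (starRingEnd ℂ) (u x) =
      ∑ i, (∫ x in Ω, ε x * u' i x * (starRingEnd ℂ) (u' i x)) +
        ∫ x in Ω, κ x * u x * (starRingEnd ℂ) (u x) := by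
    rw [hu.sum_setIntegral_mul_conj hΩo hΩb hΩc (fun i => (hu.memL2_grad i).memLp_top_mul hεL) hv
      hwv, neg_add_eq_sub, ← integral_sub (hκu.integrable_mul hu.memL2.conj)
      (hdiv.integrable_mul hu.memL2.conj)]
    exact integral_congr_ae (Eventually.of_forall fun x => by ring)
  have hre := congrArg Complex.re hform
  rw [Complex.add_re, Complex.re_sum] at hre
  calc θ * ∑ i, L2N Ω (u' i) ^ 2 - μ * L2N Ω u ^ 2
      = ∑ i, θ * L2N Ω (u' i) ^ 2 + -μ * L2N Ω u ^ 2 := by rw [Finset.mul_sum]; ring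
    _ ≤ _ := add_le_add
        (Finset.sum_le_sum fun i _ => (hu.memL2_grad i).mul_sq_L2N_le_re_setIntegral hεL hεθ)
        (hu.memL2.mul_sq_L2N_le_re_setIntegral hκL hκμ)
    _ ≤ _ := hre ▸ Complex.re_le_norm _
    _ ≤ _ := MemL2.norm_setIntegral_mul_conj_le (MemLp.add (MemLp.neg hdiv) hκu) hu.memL2

lemma sq_norm_sum_mul_le {ι 𝕜 : Type*} [Fintype ι] [NormedRing 𝕜] {E : ℝ} {a b : ι → 𝕜}
    (ha : ∀ i, ‖a i‖ ≤ E) :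
    ‖∑ i, a i * b i‖ ^ 2 ≤ Fintype.card ι * E ^ 2 * ∑ i, ‖b i‖ ^ 2 := by
  have hle : ‖∑ i, a i * b i‖ ≤ ∑ i, E * ‖b i‖ := norm_sum_le_of_le _ fun i _ =>
    (norm_mul_le _ _).trans (mul_le_mul_of_nonneg_right (ha i) (norm_nonneg _))
  calc ‖∑ i, a i * b i‖ ^ 2 ≤ (∑ i, E * ‖b i‖) ^ 2 := by gcongr
    _ = E ^ 2 * (∑ i, ‖b i‖) ^ 2 := by rw [← Finset.mul_sum, mul_pow]
    _ ≤ E ^ 2 * (Fintype.card ι * ∑ i, ‖b i‖ ^ 2) := by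
        gcongr
        simpa using sq_sum_le_card_mul_sum_sq (s := Finset.univ) (f := fun i => ‖b i‖)
    _ = _ := by ring

lemma L2N_sum_mul_le {E : ℝ} (hE : 0 ≤ E) (hgL : ∀ i, MemLp (w i) ∞ (volume.restrict Ω))
    (hg : ∀ᵐ x ∂volume.restrict Ω, ∀ i, ‖w i x‖ ≤ E) (hv : ∀ i, MemL2 Ω (v i)) :
    L2N Ω (fun x => ∑ i, w i x * v i x) ≤ √d * E * √(∑ i, L2N Ω (v i) ^ 2) := by
  have hsum : MemL2 Ω fun x => ∑ i, w i x * v i x :=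
    memLp_finsetSum _ fun i _ => (hv i).memLp_top_mul (hgL i)
  have hsq : L2N Ω (fun x => ∑ i, w i x * v i x) ^ 2 ≤ d * E ^ 2 * ∑ i, L2N Ω (v i) ^ 2 := by
    simp only [hsum.sq_L2N, fun i => (hv i).sq_L2N]
    have hint (i : Fin d) := (hv i).integrable_sq_norm
    rw [← integral_finsetSum _ fun i _ => hint i, ← integral_const_mul]
    refine integral_mono_ae hsum.integrable_sq_norm
      ((integrable_finsetSum _ fun i _ => hint i).const_mul _) ?_
    filter_upwards [hg] with x hx
    simpa only [Fintype.card_fin] using sq_norm_sum_mul_le (b := fun i => v i x) hx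
  have hle := Real.le_sqrt_of_sq_le hsq
  rwa [Real.sqrt_mul (by positivity), Real.sqrt_mul (by positivity), Real.sqrt_sq hE] at hle

lemma mul_L2N_le_of_le_re {θ : ℝ} (hθ : 0 < θ) (hεL : MemLp ε ∞ (volume.restrict Ω))
    (hεθ : ∀ᵐ x ∂volume.restrict Ω, θ ≤ (ε x).re) (hu : MemL2 Ω u) :
    θ * L2N Ω u ≤ L2N Ω fun x => ε x * u x := by
  rw [← le_inv_mul_iff₀ hθ]
  refine (hu.memLp_top_mul hεL).L2N_le_mul (by positivity) ?_
  filter_upwards [hεθ] with x hx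
  rw [le_inv_mul_iff₀ hθ, norm_mul]
  exact mul_le_mul_of_nonneg_right (hx.trans (Complex.re_le_norm _)) (norm_nonneg _)

lemma mul_L2N_sum_le {θ E : ℝ} (hθ : 0 < θ) (hE : 0 ≤ E)
    (hεL : MemLp ε ∞ (volume.restrict Ω)) (hεθ : ∀ᵐ x ∂volume.restrict Ω, θ ≤ (ε x).re)
    (hwL : ∀ i, MemLp (w i) ∞ (volume.restrict Ω))
    (hwE : ∀ᵐ x ∂volume.restrict Ω, ∀ i, ‖w i x‖ ≤ E) (hκL : MemLp κ ∞ (volume.restrict Ω))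
    (hu : MemL2 Ω u) (hu' : ∀ i, MemL2 Ω (u' i)) (hv : ∀ i, MemL2 Ω (v i)) :
    θ * L2N Ω (fun x => ∑ i, v i x) ≤
      L2N Ω (fun x => -(∑ i, (w i x * u' i x + ε x * v i x)) + κ x * u x) +
        LinfN Ω κ * L2N Ω u + √d * E * √(∑ i, L2N Ω (u' i) ^ 2) := by
  set Lu : Euc d → ℂ := fun x => -(∑ i, (w i x * u' i x + ε x * v i x)) + κ x * u x
  have hwu (i : Fin d) := (hu' i).memLp_top_mul (hwL i)
  have hsum : MemL2 Ω fun x => ∑ i, v i x := memLp_finsetSum _ fun i _ => hv i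
  have hκu := hu.memLp_top_mul hκL
  have hgrad : MemL2 Ω fun x => ∑ i, w i x * u' i x := memLp_finsetSum _ fun i _ => hwu i
  have hLu : MemL2 Ω Lu := MemLp.add (MemLp.neg (memLp_finsetSum _ fun i _ =>
    MemLp.add (hwu i) ((hv i).memLp_top_mul hεL))) hκu
  have hκu_le : L2N Ω (fun x => κ x * u x) ≤ LinfN Ω κ * L2N Ω u :=
    hu.L2N_le_mul LinfN_nonneg ((ae_norm_le_LinfN hκL).mono fun x hx => by
      rw [norm_mul]; exact mul_le_mul_of_nonneg_right hx (norm_nonneg _))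
  calc θ * L2N Ω (fun x => ∑ i, v i x) ≤ L2N Ω (fun x => ε x * ∑ i, v i x) :=
        mul_L2N_le_of_le_re hθ hεL hεθ hsum
    _ = L2N Ω fun x => (κ x * u x - Lu x) - ∑ i, w i x * u' i x :=
        congrArg (L2N Ω) <| funext fun x => by
          simp only [Lu, Finset.sum_add_distrib, Finset.mul_sum]
          ring
    _ ≤ L2N Ω (fun x => κ x * u x) + L2N Ω Lu + L2N Ω fun x => ∑ i, w i x * u' i x :=
        (MemL2.L2N_sub_le (MemLp.sub hκu hLu) hgrad).trans
          (add_le_add_left (hκu.L2N_sub_le hLu) _)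
    _ ≤ LinfN Ω κ * L2N Ω u + L2N Ω Lu + √d * E * √(∑ i, L2N Ω (u' i) ^ 2) :=
        add_le_add (add_le_add_left hκu_le _) (L2N_sum_mul_le hE hwL hwE hu')
    _ = _ := by ring

end EnergyEstimates

section EllipticEstimate

lemma mul_le_mul_of_coercive {s θ μ N G F : ℝ} (hs : 0 ≤ s) (hμ : 0 ≤ μ) (hN : 0 ≤ N) (hG : 0 ≤ G)
    (hF : 0 ≤ F) (hsN : s * N ≤ G) (hcoer : θ * G ^ 2 - μ * N ^ 2 ≤ F * N) :
    G * (θ * s ^ 2 - μ) ≤ s * F := by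
  rcases hG.eq_or_lt' with rfl | hGpos
  · rw [zero_mul]
    positivity
  refine le_of_mul_le_mul_right ?_ hGpos
  have hsN_sq : (s * N) ^ 2 ≤ G ^ 2 := pow_le_pow_left₀ (by positivity) hsN 2
  calc G * (θ * s ^ 2 - μ) * G = s ^ 2 * (θ * G ^ 2) - μ * G ^ 2 := by ring
    _ ≤ s ^ 2 * (θ * G ^ 2) - μ * (s * N) ^ 2 := by gcongr
    _ = s ^ 2 * (θ * G ^ 2 - μ * N ^ 2) := by ring
    _ ≤ s ^ 2 * (F * N) := by gcongr
    _ = s * F * (s * N) := by ring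
    _ ≤ s * F * G := by gcongr

lemma le_mul_div_of_coercive {s θ μ N G D F k e : ℝ} (hs : 0 < s) (hθ : 0 < θ) (hμ : 0 ≤ μ)
    (hsμ : 0 < θ * s ^ 2 - μ) (hN : 0 ≤ N) (hG : 0 ≤ G) (hF : 0 ≤ F) (hk : 0 ≤ k) (he : 0 ≤ e)
    (hsN : s * N ≤ G) (hcoer : θ * G ^ 2 - μ * N ^ 2 ≤ F * N)
    (hD : θ * D ≤ F + k * N + e * G) :
    D ≤ (1 + (k + e * s) / (θ * s ^ 2 - μ)) * F / θ := by
  have hGF : G ≤ s * F / (θ * s ^ 2 - μ) :=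
    (le_div_iff₀ hsμ).2 (mul_le_mul_of_coercive hs.le hμ hN hG hF hsN hcoer)
  have hNF : N ≤ F / (θ * s ^ 2 - μ) :=
    le_of_mul_le_mul_left (hsN.trans (hGF.trans_eq (mul_div_assoc _ _ _))) hs
  rw [le_div_iff₀ hθ]
  calc D * θ ≤ F + k * N + e * G := by linarith
    _ ≤ F + k * (F / (θ * s ^ 2 - μ)) + e * (s * F / (θ * s ^ 2 - μ)) := by gcongr
    _ = _ := by ring

lemma one_add_add_sq_le_sq_rpow {l : ℝ} (hl : 0 ≤ l) :
    1 + l + l ^ 2 ≤ ((1 + l ^ ((2 : ℝ) / 3)) ^ ((3 : ℝ) / 2)) ^ 2 := by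
  obtain ⟨m, hm, rfl⟩ : ∃ m : ℝ, 0 ≤ m ∧ m ^ 3 = l :=
    ⟨l ^ (3 : ℝ)⁻¹, by positivity, Real.rpow_inv_natCast_pow hl three_ne_zero⟩
  have hm_sq : (m ^ 3) ^ ((2 : ℝ) / 3) = m ^ 2 := by
    rw [← Real.rpow_natCast_mul hm, ← Real.rpow_natCast]
    norm_num
  rw [hm_sq, ← Real.rpow_mul_natCast (by positivity)]
  norm_num
  nlinarith [mul_nonneg (sq_nonneg m) (sq_nonneg (m - 1)), sq_nonneg (m ^ 2)]

lemma sqrt_sq_add_sq_add_le {l N G D H : ℝ} (hl : 0 < l) (hN : 0 ≤ N) (hD : 0 ≤ D)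
    (hlN : l * N ^ 2 ≤ G ^ 2) (hGD : G ^ 2 ≤ D * N) (hH : H ≤ D ^ 2) :
    √(N ^ 2 + G ^ 2 + H) ≤ l⁻¹ * (1 + l ^ ((2 : ℝ) / 3)) ^ ((3 : ℝ) / 2) * D := by
  have hND : l * N ≤ D := by
    rcases hN.eq_or_lt' with rfl | hNpos
    · rwa [mul_zero]
    · exact le_of_mul_le_mul_right (by linarith) hNpos
  have hND_sq : (l * N) ^ 2 ≤ D ^ 2 := pow_le_pow_left₀ (by positivity) hND 2
  have hGD_sq : l * G ^ 2 ≤ D ^ 2 := by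
    calc l * G ^ 2 ≤ l * (D * N) := by gcongr
      _ = D * (l * N) := by ring
      _ ≤ D * D := by gcongr
      _ = D ^ 2 := by ring
  rw [Real.sqrt_le_left (by positivity), mul_pow, mul_pow, inv_pow, inv_mul_eq_div,
    div_mul_eq_mul_div, le_div_iff₀ (by positivity)]
  calc (N ^ 2 + G ^ 2 + H) * l ^ 2 = (l * N) ^ 2 + l * (l * G ^ 2) + l ^ 2 * H := by ring
    _ ≤ D ^ 2 + l * D ^ 2 + l ^ 2 * D ^ 2 := by gcongr
    _ = (1 + l + l ^ 2) * D ^ 2 := by ring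
    _ ≤ _ := mul_le_mul_of_nonneg_right (one_add_add_sq_le_sq_rpow hl.le) (sq_nonneg D)

variable {d : ℕ} {Ω : Set (Euc d)} {ε κ u : Euc d → ℂ} {u' : Fin d → Euc d → ℂ}
  {b : Fin d → Fin d → Euc d → ℂ} {θ μ E : ℝ}

lemma nonempty_and_dim_pos_of_lambda1_pos (h : 0 < lambda1 Ω) : Ω.Nonempty ∧ 0 < d := by
  obtain ⟨φ, hφ, hφ₀⟩ : ∃ φ, IsTestFun Ω φ ∧ fderiv ℝ φ ≠ 0 := by
    by_contra! hφ
    refine h.not_ge (Real.sInf_nonpos ?_)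
    rintro r ⟨φ, hφ', -, rfl⟩
    simp [hφ φ hφ']
  obtain ⟨x, hx⟩ := Function.ne_iff.1 hφ₀
  refine ⟨⟨x, hφ.2.2 (support_fderiv_subset ℝ hx)⟩, Nat.pos_of_ne_zero ?_⟩
  rintro rfl
  exact hx (Subsingleton.elim _ _)

lemma nonneg_of_lambda1_pos_of_norm_pd_le (h : 0 < lambda1 Ω)
    (hE : ∀ x ∈ Ω, ∀ i, ‖pd i ε x‖ ≤ E) : 0 ≤ E := by
  obtain ⟨⟨x, hx⟩, hd⟩ := nonempty_and_dim_pos_of_lambda1_pos h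
  exact (norm_nonneg _).trans (hE x hx ⟨0, hd⟩)

lemma mul_lambda1_sub_pos (hθ : 0 < θ) (h : μ / θ < lambda1 Ω) : 0 < θ * lambda1 Ω - μ := by
  rw [div_lt_iff₀ hθ] at h
  linarith

lemma HasL2Grad.sqrt_sum_sq_L2N_le (hΩo : IsOpen Ω) (hΩb : Bornology.IsBounded Ω)
    (hΩc : Convex ℝ Ω) (hΩs : HasSmoothBoundary Ω) (hθ : 0 < θ)
    (hε : ∀ x ∈ Ω, DifferentiableAt ℝ ε x) (hεL : MemLp ε ∞ (volume.restrict Ω))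
    (hεL' : ∀ i, MemLp (pd i ε) ∞ (volume.restrict Ω))
    (hεθ : ∀ᵐ x ∂volume.restrict Ω, θ ≤ (ε x).re) (hE : 0 ≤ E)
    (hεE : ∀ᵐ x ∂volume.restrict Ω, ∀ i, ‖pd i ε x‖ ≤ E)
    (hκL : MemLp κ ∞ (volume.restrict Ω)) (hμ : 0 ≤ μ)
    (hκμ : ∀ᵐ x ∂volume.restrict Ω, -μ ≤ (κ x).re) (hspec : μ / θ < lambda1 Ω)
    (hu : HasL2Grad Ω univ u u') (hb : ∀ j, HasL2Grad Ω Ω (u' j) fun i => b i j) :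
    √(L2N Ω u ^ 2 + ∑ i, L2N Ω (u' i) ^ 2 + ∑ i, ∑ j, L2N Ω (b i j) ^ 2) ≤
      ((lambda1 Ω)⁻¹ * (1 + lambda1 Ω ^ ((2 : ℝ) / 3)) ^ ((3 : ℝ) / 2) / θ) *
        (1 + (LinfN Ω κ + √d * E * √(lambda1 Ω)) / (θ * lambda1 Ω - μ)) *
        L2N Ω fun x => -(∑ i, (pd i ε x * u' i x + ε x * b i i x)) + κ x * u x := by
  have hl : 0 < lambda1 Ω := (div_nonneg hμ hθ.le).trans_lt hspec
  have hεu (i : Fin d) := (hb i).mul_of_differentiableAt hΩo hΩb hΩc hε hεL hεL'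
  have hbb (i : Fin d) := (hb i).memL2_grad i
  have hgrad_sq := Real.sq_sqrt (show 0 ≤ ∑ i, L2N Ω (u' i) ^ 2 by positivity)
  have hpoincare := hu.lambda1_mul_sq_L2N_le hΩo hΩb hΩc
  have hcoer := hu.mul_sum_sq_L2N_sub_le hΩo hΩb hΩc hεL hεθ hκL hκμ
    (fun i => (hεu i).memL2_grad i) fun i => (hεu i).isWeakDeriv i
  have hgrad := hu.sum_sq_L2N_le_mul hΩo hΩb hΩc hbb fun i => (hb i).isWeakDeriv i
  have hlap := mul_L2N_sum_le hθ hE hεL hεθ hεL' hεE hκL hu.memL2 hu.memL2_grad hbb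
  have hhess := HasL2Grad.sum_sum_sq_L2N_le hΩs hΩb hΩc hu hb
  rw [← hgrad_sq] at hpoincare hcoer hgrad ⊢
  have hsN : √(lambda1 Ω) * L2N Ω u ≤ √(∑ i, L2N Ω (u' i) ^ 2) := by
    refine (sq_le_sq₀ (by have := L2N_nonneg (Ω := Ω) (f := u); positivity)
      (Real.sqrt_nonneg _)).1 ?_
    rwa [mul_pow, Real.sq_sqrt hl.le]
  refine (sqrt_sq_add_sq_add_le hl L2N_nonneg L2N_nonneg hpoincare hgrad hhess).trans ?_
  have hD := le_mul_div_of_coercive (Real.sqrt_pos.2 hl) hθ hμ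
    (by rw [Real.sq_sqrt hl.le]; exact mul_lambda1_sub_pos hθ hspec) L2N_nonneg
    (Real.sqrt_nonneg _) L2N_nonneg LinfN_nonneg (by positivity) hsN hcoer hlap
  rw [Real.sq_sqrt hl.le] at hD
  exact (mul_le_mul_of_nonneg_left hD (by positivity)).trans_eq (by ring)

end EllipticEstimate

section SobolevFunctions

variable {d : ℕ} {Ω : Set (Euc d)}

/-- The second-order weak partial derivative `∂ᵢ∂ⱼ u`; as in `SobFun.weak`, the outermost
derivative is the first entry of the multi-index. -/
def SobFun.d2 (U : SobFun d Ω 2) (i j : Fin d) : Euc d → ℂ := U.D 2 (Fin.cons i fun _ => j)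

lemma SobFun.hasL2Grad_u (U : SobFun d Ω 2) : HasL2Grad Ω Ω U.u U.d1 := by
  refine ⟨U.mem 0 zero_le _, fun i => U.mem 1 one_le_two _, fun i => ?_⟩
  have hcons : (Fin.cons i fun k : Fin 0 => k.elim0 : Fin 1 → Fin d) = fun _ => i :=
    funext fun k => by rw [Subsingleton.elim (α := Fin 1) k 0, Fin.cons_zero]
  have hweak := U.weak 0 two_pos (fun k => k.elim0) i
  rwa [hcons] at hweak

lemma SobFun.hasL2Grad_d1 (U : SobFun d Ω 2) (j : Fin d) :
    HasL2Grad Ω Ω (U.d1 j) fun i => U.d2 i j :=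
  ⟨U.mem 1 one_le_two _, fun _ => U.mem 2 le_rfl _, U.weak 1 one_lt_two _⟩

lemma SobFun.sobNormInt_eq_sqrt (U : SobFun d Ω 2) :
    SobNormInt U = √(L2N Ω U.u ^ 2 + ∑ i, L2N Ω (U.d1 i) ^ 2 +
      ∑ i, ∑ j, L2N Ω (U.d2 i j) ^ 2) := by
  have hzero : ∑ v : Fin 0 → Fin d, L2N Ω (U.D 0 v) ^ 2 = L2N Ω U.u ^ 2 :=
    Fintype.sum_subsingleton _ _
  have hone : ∑ v : Fin 1 → Fin d, L2N Ω (U.D 1 v) ^ 2 = ∑ i, L2N Ω (U.d1 i) ^ 2 :=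
    (Fintype.sum_equiv (Equiv.funUnique (Fin 1) (Fin d)).symm _ _ fun _ => rfl).symm
  have htwo : ∑ v : Fin 2 → Fin d, L2N Ω (U.D 2 v) ^ 2 = ∑ i, ∑ j, L2N Ω (U.d2 i j) ^ 2 := by
    rw [← Fintype.sum_prod_type' fun i j => L2N Ω (U.d2 i j) ^ 2]
    refine Fintype.sum_equiv (finTwoArrowEquiv (Fin d)) _ _ fun v => ?_
    have hv : v = Fin.cons (v 0) fun _ => v 1 := by
      ext k
      fin_cases k <;> rfl
    rw [hv]
    rfl
  rw [SobNormInt, Finset.sum_range_succ, Finset.sum_range_succ, Finset.sum_range_one, hzero, hone,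
    htwo]

lemma HasL2Grad.grad_ae_eq_zero {u : Euc d → ℂ} {u' : Fin d → Euc d → ℂ} (hΩ : IsOpen Ω)
    (h : HasL2Grad Ω Ω u u') (hu : u =ᵐ[volume.restrict Ω] 0) (i : Fin d) :
    u' i =ᵐ[volume.restrict Ω] 0 :=
  IsWeakDeriv.ae_eq hΩ (h.memL2_grad i) MemLp.zero (h.isWeakDeriv i) fun φ _ => by
    have hzero : (fun x => u x * pd i φ x) =ᵐ[volume.restrict Ω] 0 := by
      filter_upwards [hu] with x hx
      simp [hx]
    rw [integral_congr_ae hzero]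
    simp

lemma SobFun.sobNormInt_eq_zero (hΩ : IsOpen Ω) (U : SobFun d Ω 2)
    (hU : U.u =ᵐ[volume.restrict Ω] 0) : SobNormInt U = 0 := by
  have hd1 (j : Fin d) := U.hasL2Grad_u.grad_ae_eq_zero hΩ hU j
  have hd2 (i j : Fin d) := (U.hasL2Grad_d1 j).grad_ae_eq_zero hΩ (hd1 j) i
  simp [U.sobNormInt_eq_sqrt, L2N_eq_zero_of_ae_eq_zero hU,
    fun j => L2N_eq_zero_of_ae_eq_zero (hd1 j), fun i j => L2N_eq_zero_of_ae_eq_zero (hd2 i j)]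

/- The divergence data in `IsLu` need not be locally integrable; when they are not, some
`ε * ∂ᵢ u` has vanishing weak derivative, which forces `u = 0`. -/
lemma IsLu.ae_eq_zero_or_ae_eq {θ : ℝ} {ε κ Lu : Euc d → ℂ} {U : SobFun d Ω 2}
    (hΩo : IsOpen Ω) (hΩb : Bornology.IsBounded Ω) (hΩc : Convex ℝ Ω) (hθ : 0 < θ)
    (hε : ∀ x ∈ Ω, DifferentiableAt ℝ ε x) (hεL : MemLp ε ∞ (volume.restrict Ω))
    (hεL' : ∀ i, MemLp (pd i ε) ∞ (volume.restrict Ω))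
    (hεθ : ∀ᵐ x ∂volume.restrict Ω, θ ≤ (ε x).re) (hU : MemH10 Ω U.u)
    (hLu : IsLu Ω (fun x => Matrix.diagonal fun _ => ε x) κ U Lu) :
    U.u =ᵐ[volume.restrict Ω] 0 ∨ Lu =ᵐ[volume.restrict Ω] fun x =>
      -(∑ i, (pd i ε x * U.d1 i x + ε x * U.d2 i i x)) + κ x * U.u x := by
  obtain ⟨g, hg, hLg⟩ := hLu
  have hdiag (i : Fin d) : (fun x => ∑ j, Matrix.diagonal (fun _ => ε x) i j * U.d1 j x) =
      fun x => ε x * U.d1 i x := by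
    simp [Matrix.diagonal_apply, ite_mul]
  simp only [hdiag] at hg
  have hu := U.hasL2Grad_u.of_memH10 hΩo hΩc hU
  have hεu (i : Fin d) := (U.hasL2Grad_d1 i).mul_of_differentiableAt hΩo hΩb hΩc hε hεL hεL'
  refine or_iff_not_imp_left.2 fun hne => ?_
  have hg_eq (i : Fin d) := ((hεu i).isWeakDeriv i).zero_or_ae_eq hΩo (hεu i).memL2
    ((hεu i).memL2_grad i) (hg i) |>.resolve_left fun hzero =>
    hne (hu.ae_eq_zero_of_isWeakDeriv_mul_zero hθ hΩo hΩb hΩc hεL hεθ hzero)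
  filter_upwards [hLg, ae_all_iff.2 hg_eq] with x hx hgx
  simp only [hx, hgx]

lemma memLp_top_pd {ε : Euc d → ℂ} {E : ℝ} {i : Fin d}
    (h : ∀ᵐ x ∂volume.restrict Ω, ‖pd i ε x‖ ≤ E) : MemLp (pd i ε) ∞ (volume.restrict Ω) :=
  memLp_top_of_bound (measurable_fderiv_apply_const ℝ ε _).aestronglyMeasurable E h

end SobolevFunctions

/-- Lemma `C_H0`: bound for the elliptic regularity constant C_H when
ε is scalar: for every u ∈ H²(Ω) ∩ H¹₀(Ω) and every representative Lu of L u,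
  ‖u‖_{H²} ≤ (λ₁^{-1}⟨λ₁^{1/3}⟩³/θ)·(1 + (‖κ²‖_∞ + √d·max_i‖∂_i ε‖_∞·λ₁^{1/2})/(θλ₁-μ))
      · ‖L u‖_{L²}. -/
theorem npbe_CH_bound_scalar
    (d : ℕ) (Ω : Set (Euc d)) (hΩo : IsOpen Ω) (hΩb : Bornology.IsBounded Ω)
    (hΩc : Convex ℝ Ω) (hΩs : HasSmoothBoundary Ω)
    (ε : Euc d → ℂ) (θ : ℝ) (hθ : 0 < θ)
    (hεdiff : ∀ x ∈ Ω, DifferentiableAt ℝ ε x)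
    (hεlb : ∀ x ∈ Ω, θ ≤ (ε x).re)
    (Emax : ℝ) (hEmax : ∀ x ∈ Ω, ∀ i : Fin d, ‖pd i ε x‖ ≤ Emax)
    (hεK : ∃ K : ℝ≥0, LipschitzOnWith K ε Ω ∧ ∀ x ∈ Ω, ‖ε x‖ ≤ (K : ℝ))
    (κ2 : Euc d → ℂ) (hκL : MemLp κ2 ⊤ (volume.restrict Ω))
    (μ : ℝ) (hμ : 0 ≤ μ) (hκ : ∀ᵐ x ∂(volume.restrict Ω), -μ ≤ (κ2 x).re)
    (hspec : μ / θ < lambda1 Ω)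
    (U : SobFun d Ω 2) (hU0 : MemH10 Ω U.u) (Lu : Euc d → ℂ)
    (hLu : IsLu Ω (fun x => Matrix.diagonal (fun _ => ε x)) κ2 U Lu) :
    SobNormInt U ≤
      ((lambda1 Ω)⁻¹ * (1 + lambda1 Ω ^ ((2:ℝ)/3)) ^ ((3:ℝ)/2) / θ)
        * (1 + (LinfN Ω κ2 + Real.sqrt d * Emax * Real.sqrt (lambda1 Ω))
            / (θ * lambda1 Ω - μ))
        * L2N Ω Lu := by
  obtain ⟨K, hεK_lip, hεK_bdd⟩ := hεK
  have hae {p : Euc d → Prop} (hp : ∀ x ∈ Ω, p x) : ∀ᵐ x ∂volume.restrict Ω, p x :=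
    (ae_restrict_iff' hΩo.measurableSet).2 (Eventually.of_forall hp)
  have hεL : MemLp ε ∞ (volume.restrict Ω) := memLp_top_of_bound
    (hεK_lip.continuousOn.aestronglyMeasurable hΩo.measurableSet) K (hae hεK_bdd)
  have hεL' (i : Fin d) : MemLp (pd i ε) ∞ (volume.restrict Ω) :=
    memLp_top_pd (hae fun x hx => hEmax x hx i)
  have hl : 0 < lambda1 Ω := (div_nonneg hμ hθ.le).trans_lt hspec
  have hE : 0 ≤ Emax := nonneg_of_lambda1_pos_of_norm_pd_le hl hEmax
  rcases hLu.ae_eq_zero_or_ae_eq hΩo hΩb hΩc hθ hεdiff hεL hεL' (hae hεlb) hU0 with hzero | hLu_eq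
  · have hgap : 0 < θ * lambda1 Ω - μ := mul_lambda1_sub_pos hθ hspec
    rw [U.sobNormInt_eq_zero hΩo hzero]
    have hκ₀ : 0 ≤ LinfN Ω κ2 := LinfN_nonneg
    have hLu₀ : 0 ≤ L2N Ω Lu := L2N_nonneg
    positivity
  · rw [U.sobNormInt_eq_sqrt, L2N_congr hLu_eq]
    exact (U.hasL2Grad_u.of_memH10 hΩo hΩc hU0).sqrt_sum_sq_L2N_le hΩo hΩb hΩc hΩs hθ hεdiff hεL
      hεL' (hae hεlb) hE (hae hEmax) hκL hμ hκ hspec U.hasL2Grad_d1
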